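/- arXiv:2507.00934 — 4 statements merged into one kernel-verified Lean document; each statement's English description precedes it below -/
import Mathlib

section
/- Let G = GO₄⁺(3) be the group of 4×4 matrices M over 𝔽₃ = ℤ/3ℤ with Mᵀ·M = 1, and let PGO₄⁺(3) be the quotient of G by its center. Then PGO₄⁺(3) contains no element of order 8: every element of G ⧸ Z(G) has order different from 8. -/
attribute [local instance] starRingOfComm

/-!
A matrix commuting with the reflections `1 - 2 Eᵢᵢ` and with the swap matrices commutes with all
matrix units `Eᵢⱼ`, so the center of the orthogonal group is `{±1}` and the question is whether
`M ^ 8 = ±1` forces `M ^ 4 = ±1`.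

Let `M` be orthogonal with `M ^ 8 = ±1`. Since `M⁻¹ = Mᵀ` has the same minimal polynomial as `M`,
the roots of that polynomial are stable under inversion, and over `𝔽₃` they are also stable under
cubing. Every unit modulo `8` or `16` is `± 3 ^ j`, so as soon as one primitive `8`-th or `16`-th
root of unity is a root of `minpoly M`, all of them are: each of `Φ₈` and `Φ₁₆` is either coprime to
`minpoly M` or divides it. If `M ^ 8 = -1`, then `Φ₁₆ = X ^ 8 + 1` would have to divide `minpoly M`,
which has degree at most `4`. If `M ^ 8 = 1`, then either `minpoly M` is coprime to `Φ₈ = X ^ 4 + 1`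
and `M ^ 4 = 1`, or it is equal to `Φ₈` and `M ^ 4 = -1`.
-/

section MinimalPolynomial

open Polynomial

theorem aeval_reverse_of_mul_eq_one {R A : Type*} [CommSemiring R] [Semiring A] [Algebra R A]
    {a b : A} (hab : a * b = 1) (f : R[X]) :
    aeval b f.reverse = aeval a f * b ^ f.natDegree := by
  rw [aeval_eq_sum_range' (Nat.lt_succ_of_le f.reverse_natDegree_le), aeval_eq_sum_range,
    Finset.sum_mul, ← Finset.sum_flip]
  refine Finset.sum_congr rfl fun i hi ↦ ?_
  have hi : i ≤ f.natDegree := Finset.mem_range_succ_iff.mp hi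
  calc f.reverse.coeff (f.natDegree - i) • b ^ (f.natDegree - i)
      = f.coeff i • (a ^ i * b ^ i * b ^ (f.natDegree - i)) := by
        rw [coeff_reverse, revAt_le (Nat.sub_le _ _), Nat.sub_sub_self hi,
          pow_mul_pow_eq_one i hab, one_mul]
    _ = f.coeff i • a ^ i * b ^ f.natDegree := by
        rw [mul_assoc, ← pow_add, Nat.add_sub_cancel' hi, smul_mul_assoc]

theorem aeval_inv_eq_zero_of_dvd_reverse {F K : Type*} [CommSemiring F] [Field K] [Algebra F K]
    {f : F[X]} (hf : f ∣ f.reverse) {μ : K} (hμ₀ : μ ≠ 0) (hμ : aeval μ f = 0) :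
    aeval μ⁻¹ f = 0 := by
  have h : aeval μ⁻¹ f * μ ^ f.natDegree = 0 := by
    rw [← aeval_reverse_of_mul_eq_one (inv_mul_cancel₀ hμ₀)]
    exact aeval_eq_zero_of_dvd_aeval_eq_zero hf hμ
  exact (mul_eq_zero.mp h).resolve_right (pow_ne_zero _ hμ₀)

theorem aeval_transpose {R n : Type*} [CommSemiring R] [Fintype n] [DecidableEq n]
    (M : Matrix n n R) (f : R[X]) : aeval M.transpose f = (aeval M f).transpose := by
  simp only [aeval_eq_sum_range, Matrix.transpose_sum, Matrix.transpose_smul,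
    Matrix.transpose_pow]

theorem minpoly_dvd_reverse_of_transpose_mul_self {F n : Type*} [Field F] [Fintype n]
    [DecidableEq n] {M : Matrix n n F} (hM : M.transpose * M = 1) :
    minpoly F M ∣ (minpoly F M).reverse := by
  apply minpoly.dvd
  rw [aeval_reverse_of_mul_eq_one hM, aeval_transpose, minpoly.aeval, Matrix.transpose_zero,
    zero_mul]

theorem natDegree_minpoly_le_card {F n : Type*} [Field F] [Fintype n] [DecidableEq n]
    (M : Matrix n n F) : (minpoly F M).natDegree ≤ Fintype.card n :=
  M.charpoly_natDegree_eq_dim ▸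
    natDegree_le_of_dvd M.minpoly_dvd_charpoly M.charpoly_monic.ne_zero

theorem aeval_pow_card_pow_eq_zero {F K : Type*} [Field F] [Fintype F] [CommRing K] [Algebra F K]
    {f : F[X]} {μ : K} (hμ : aeval μ f = 0) (j : ℕ) : aeval (μ ^ Fintype.card F ^ j) f = 0 := by
  induction j with
  | zero => simpa using hμ
  | succ j ih =>
    rw [pow_succ, pow_mul, ← FiniteField.frobeniusAlgHom_apply F, aeval_algHom_apply, ih, map_zero]

theorem cyclotomic_dvd_of_forall_aeval_eq_zero {F K : Type*} [Field F] [Field K] [Algebra F K]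
    {m : ℕ} {μ : K} (hμ : IsPrimitiveRoot μ m) {f : F[X]}
    (hf : ∀ ξ : K, IsPrimitiveRoot ξ m → aeval ξ f = 0) : cyclotomic m F ∣ f := by
  rw [← map_dvd_map' (algebraMap F K), map_cyclotomic, cyclotomic_eq_prod_X_sub_primitiveRoots hμ]
  refine Finset.prod_dvd_of_coprime
    (fun _ _ _ _ hne ↦ pairwise_coprime_X_sub_C Function.injective_id hne) fun ξ hξ ↦ ?_
  simpa only [dvd_iff_isRoot, IsRoot.def, eval_map_algebraMap] using
    hf ξ (isPrimitiveRoot_of_mem_primitiveRoots hξ)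

theorem aeval_eq_zero_of_isPrimitiveRoot {F K : Type*} [Field F] [Fintype F] [Field K]
    [Algebra F K] {m : ℕ} [NeZero m]
    (hm : ∀ u : (ZMod m)ˣ, ∃ j : ℕ, (u : ZMod m) = (Fintype.card F : ZMod m) ^ j ∨
      (u : ZMod m) = -(Fintype.card F : ZMod m) ^ j)
    {f : F[X]} (hf : f ∣ f.reverse) {μ ξ : K} (hμ : IsPrimitiveRoot μ m)
    (hξ : IsPrimitiveRoot ξ m) (hμf : aeval μ f = 0) : aeval ξ f = 0 := by
  have hm₀ : m ≠ 0 := NeZero.ne m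
  obtain ⟨i, -, hi, rfl⟩ := hμ.isPrimitiveRoot_iff.mp hξ
  obtain ⟨j, hj⟩ := hm (ZMod.unitOfCoprime i hi)
  rw [ZMod.coe_unitOfCoprime] at hj
  have hroot : aeval (μ ^ Fintype.card F ^ j) f = 0 := aeval_pow_card_pow_eq_zero hμf j
  rcases hj with hj | hj
  · have hpow : μ ^ i = μ ^ Fintype.card F ^ j := by
      rw [(hμ.isOfFinOrder hm₀).pow_eq_pow_iff_modEq, ← hμ.eq_orderOf,
        ← ZMod.natCast_eq_natCast_iff, hj, Nat.cast_pow]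
    rwa [hpow]
  · have hpow : μ ^ i * μ ^ Fintype.card F ^ j = 1 := by
      rw [← pow_add, hμ.pow_eq_one_iff_dvd, ← ZMod.natCast_eq_zero_iff, Nat.cast_add, hj,
        Nat.cast_pow, neg_add_cancel]
    rw [eq_inv_of_mul_eq_one_left hpow]
    exact aeval_inv_eq_zero_of_dvd_reverse hf (pow_ne_zero _ (hμ.ne_zero hm₀)) hroot

theorem isCoprime_cyclotomic_or_cyclotomic_dvd {F : Type*} [Field F] [Fintype F] {m : ℕ}
    [NeZero (m : F)]
    (hm : ∀ u : (ZMod m)ˣ, ∃ j : ℕ, (u : ZMod m) = (Fintype.card F : ZMod m) ^ j ∨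
      (u : ZMod m) = -(Fintype.card F : ZMod m) ^ j)
    {f : F[X]} (hf : f ∣ f.reverse) : IsCoprime f (cyclotomic m F) ∨ cyclotomic m F ∣ f := by
  let K := AlgebraicClosure F
  have : NeZero (m : K) := NeZero.nat_of_injective (algebraMap F K).injective
  have : NeZero m := NeZero.of_neZero_natCast F
  refine or_iff_not_imp_left.mpr fun hcop ↦ ?_
  rw [isCoprime_iff_aeval_ne_zero_of_isAlgClosed F K] at hcop
  push Not at hcop
  obtain ⟨μ, hμf, hμm⟩ := hcop
  have hμ : IsPrimitiveRoot μ m := by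
    rwa [aeval_def, eval₂_eq_eval_map, map_cyclotomic, ← IsRoot.def, isRoot_cyclotomic_iff] at hμm
  exact cyclotomic_dvd_of_forall_aeval_eq_zero hμ fun ξ hξ ↦
    aeval_eq_zero_of_isPrimitiveRoot hm hf hμ hξ hμf

theorem cyclotomic_two_pow_succ (R : Type*) [CommRing R] (k : ℕ) :
    cyclotomic (2 ^ (k + 1)) R = X ^ 2 ^ k + 1 := by
  rw [cyclotomic_prime_pow_eq_geom_sum Nat.prime_two, Finset.sum_range_succ, Finset.sum_range_one,
    pow_zero, pow_one, add_comm]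

theorem unit_zmod_eight_eq_three_pow_or_neg (u : (ZMod 8)ˣ) :
    ∃ j : ℕ, (u : ZMod 8) = 3 ^ j ∨ (u : ZMod 8) = -3 ^ j := by
  have h : ∀ u : (ZMod 8)ˣ, ∃ j < 2, (u : ZMod 8) = 3 ^ j ∨ (u : ZMod 8) = -3 ^ j := by decide
  exact (h u).imp fun _ ↦ And.right

theorem unit_zmod_sixteen_eq_three_pow_or_neg (u : (ZMod 16)ˣ) :
    ∃ j : ℕ, (u : ZMod 16) = 3 ^ j ∨ (u : ZMod 16) = -3 ^ j := by
  have h : ∀ u : (ZMod 16)ˣ, ∃ j < 4, (u : ZMod 16) = 3 ^ j ∨ (u : ZMod 16) = -3 ^ j := by decide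
  exact (h u).imp fun _ ↦ And.right

namespace TernaryOrthogonal

variable {n : Type*} [Fintype n] [DecidableEq n] {M : Matrix n n (ZMod 3)}

theorem pow_eight_ne_neg_one [Nonempty n] (hn : Fintype.card n < 8) (hM : M.transpose * M = 1) :
    M ^ 8 ≠ -1 := by
  intro h8
  have hΦ : cyclotomic 16 (ZMod 3) = X ^ 8 + 1 := cyclotomic_two_pow_succ (ZMod 3) 3
  have : NeZero ((16 : ℕ) : ZMod 3) := ⟨by decide⟩
  have hdvd : minpoly (ZMod 3) M ∣ cyclotomic 16 (ZMod 3) := minpoly.dvd _ _ (by simp [hΦ, h8])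
  rcases isCoprime_cyclotomic_or_cyclotomic_dvd (m := 16)
    (by simpa using unit_zmod_sixteen_eq_three_pow_or_neg)
    (minpoly_dvd_reverse_of_transpose_mul_self hM) with hcop | hdvd'
  · exact minpoly.not_isUnit (ZMod 3) M (hcop.isUnit_of_dvd' dvd_rfl hdvd)
  · have hdeg : 8 ≤ (minpoly (ZMod 3) M).natDegree := by
      have hΦdeg : (cyclotomic 16 (ZMod 3)).natDegree = 8 := natDegree_cyclotomic 16 _
      exact hΦdeg ▸ natDegree_le_of_dvd hdvd' (minpoly.ne_zero_of_finite (ZMod 3) M)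
    exact absurd (hdeg.trans (natDegree_minpoly_le_card M)) hn.not_ge

theorem pow_four_eq_one_or_neg_one_of_pow_eight_eq_one (hn : Fintype.card n ≤ 4)
    (hM : M.transpose * M = 1) (h8 : M ^ 8 = 1) : M ^ 4 = 1 ∨ M ^ 4 = -1 := by
  have hΦ : cyclotomic 8 (ZMod 3) = X ^ 4 + 1 := cyclotomic_two_pow_succ (ZMod 3) 2
  have : NeZero ((8 : ℕ) : ZMod 3) := ⟨by decide⟩
  rcases isCoprime_cyclotomic_or_cyclotomic_dvd (m := 8)
    (by simpa using unit_zmod_eight_eq_three_pow_or_neg)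
    (minpoly_dvd_reverse_of_transpose_mul_self hM) with hcop | hdvd
  · left
    have hdvd : minpoly (ZMod 3) M ∣ (X ^ 4 - 1) * cyclotomic 8 (ZMod 3) := by
      rw [hΦ, show (X ^ 4 - 1) * (X ^ 4 + 1) = (X ^ 8 - 1 : (ZMod 3)[X]) by ring]
      exact minpoly.dvd _ _ (by simp [h8])
    simpa [sub_eq_zero] using
      aeval_eq_zero_of_dvd_aeval_eq_zero (hcop.dvd_of_dvd_mul_right hdvd) (minpoly.aeval _ M)
  · right
    have hdeg : (minpoly (ZMod 3) M).natDegree ≤ (cyclotomic 8 (ZMod 3)).natDegree :=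
      (natDegree_minpoly_le_card M).trans (hn.trans_eq (natDegree_cyclotomic 8 _).symm)
    have hmin : minpoly (ZMod 3) M = cyclotomic 8 (ZMod 3) :=
      eq_of_monic_of_dvd_of_natDegree_le (cyclotomic.monic 8 _)
        (minpoly.monic (Algebra.IsIntegral.isIntegral M)) hdvd hdeg
    simpa [hmin, hΦ, add_eq_zero_iff_eq_neg] using minpoly.aeval (ZMod 3) M

theorem pow_four_eq_one_or_neg_one (hn : Fintype.card n ≤ 4) (hM : M.transpose * M = 1)
    (h8 : M ^ 8 = 1 ∨ M ^ 8 = -1) : M ^ 4 = 1 ∨ M ^ 4 = -1 := by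
  rcases h8 with h8 | h8
  · exact pow_four_eq_one_or_neg_one_of_pow_eight_eq_one hn hM h8
  · cases isEmpty_or_nonempty n
    · exact Or.inl (Subsingleton.elim _ _)
    · exact absurd h8 (pow_eight_ne_neg_one (by lia) hM)

end TernaryOrthogonal

end MinimalPolynomial

section Center

theorem single_mul_swap {R n : Type*} [Semiring R] [Fintype n] [DecidableEq n] (i j : n) :
    Matrix.single i i (1 : R) * Matrix.swap R i j = Matrix.single i j 1 := by
  rw [Matrix.swap, PEquiv.mul_toMatrix_toPEquiv, Equiv.symm_swap]
  simpa using Matrix.submatrix_single_equiv (Equiv.refl n) (Equiv.swap i j) i i (1 : R)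

variable {R n : Type*} [CommRing R] [Fintype n] [DecidableEq n]

theorem one_sub_two_smul_single_mem_orthogonalGroup (i : n) :
    1 - (2 : R) • Matrix.single i i (1 : R) ∈ Matrix.orthogonalGroup n R := by
  rw [Matrix.mem_orthogonalGroup_iff, Matrix.transpose_sub, Matrix.transpose_smul,
    Matrix.transpose_single, Matrix.transpose_one]
  have hidem : Matrix.single i i (1 : R) * Matrix.single i i 1 = Matrix.single i i 1 := by simp
  rw [sub_mul, one_mul, mul_sub, mul_one, smul_mul_smul_comm, hidem]
  module

theorem swap_mem_orthogonalGroup (i j : n) : Matrix.swap R i j ∈ Matrix.orthogonalGroup n R := by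
  rw [Matrix.mem_orthogonalGroup_iff, Matrix.transpose_swap, Matrix.swap_mul_self]

theorem mem_range_scalar_of_forall_commute_orthogonalGroup [NoZeroDivisors R] (h2 : (2 : R) ≠ 0)
    {Z : Matrix n n R} (hZ : ∀ A ∈ Matrix.orthogonalGroup n R, Commute A Z) :
    Z ∈ Set.range (Matrix.scalar n) := by
  have hdiag (i : n) : Commute (Matrix.single i i 1) Z := by
    have h : Commute ((2 : R) • Matrix.single i i (1 : R)) Z := by
      simpa only [sub_sub_cancel] using (Commute.one_left Z).sub_left
        (hZ _ (one_sub_two_smul_single_mem_orthogonalGroup i))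
    refine smul_right_injective _ h2 ?_
    simpa only [Commute, SemiconjBy, smul_mul_assoc, mul_smul_comm] using h
  refine Matrix.mem_range_scalar_of_commute_single fun i j _ ↦ ?_
  beta_reduce
  rw [← single_mul_swap]
  exact (hdiag i).mul_left (hZ _ (swap_mem_orthogonalGroup i j))

theorem mem_center_orthogonalGroup_iff [NoZeroDivisors R] (h2 : (2 : R) ≠ 0)
    {z : Matrix.orthogonalGroup n R} :
    z ∈ Subgroup.center (Matrix.orthogonalGroup n R) ↔ z = 1 ∨ z = -1 := by
  constructor
  · intro hz
    obtain ⟨c, hc⟩ := mem_range_scalar_of_forall_commute_orthogonalGroup h2 (Z := z.1)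
      fun A hA ↦ congrArg Subtype.val (Subgroup.mem_center_iff.mp hz ⟨A, hA⟩)
    cases isEmpty_or_nonempty n
    · exact Or.inl (Subsingleton.elim _ _)
    have hcc : c * c = 1 := by
      have hzz := (Matrix.mem_orthogonalGroup_iff n R).mp z.2
      rwa [← hc, Matrix.scalar_apply, Matrix.diagonal_transpose, ← Matrix.scalar_apply, ← map_mul,
        ← map_one (Matrix.scalar n), Matrix.scalar_inj] at hzz
    rcases mul_self_eq_one_iff.mp hcc with rfl | rfl
    · exact Or.inl (Subtype.ext (by rw [← hc, map_one, OneMemClass.coe_one]))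
    · exact Or.inr (Subtype.ext (by rw [← hc, map_neg, map_one, Unitary.coe_neg,
        OneMemClass.coe_one]))
  · rintro (rfl | rfl)
    · exact one_mem _
    · exact Subgroup.mem_center_iff.mpr fun g ↦ by rw [mul_neg_one, neg_one_mul]

end Center

theorem PGO4_plus_3_no_element_of_order_eight_general {n : Type*} [Fintype n] [DecidableEq n]
    (hn : Fintype.card n ≤ 4) :
    ∀ x : (Matrix.orthogonalGroup n (ZMod 3)) ⧸
      Subgroup.center (Matrix.orthogonalGroup n (ZMod 3)), orderOf x ≠ 8 := by
  intro x hx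
  obtain ⟨g, rfl⟩ := QuotientGroup.mk_surjective x
  have mk_pow_eq_one_iff (k : ℕ) :
      (g : Matrix.orthogonalGroup n (ZMod 3) ⧸ Subgroup.center _) ^ k = 1 ↔
        g.1 ^ k = 1 ∨ g.1 ^ k = -1 := by
    rw [← QuotientGroup.mk_pow, QuotientGroup.eq_one_iff,
      mem_center_orthogonalGroup_iff (by decide : (2 : ZMod 3) ≠ 0),
      Subtype.ext_iff, Subtype.ext_iff]
    rfl
  have h8 := (mk_pow_eq_one_iff 8).mp (hx ▸ pow_orderOf_eq_one _)
  have h4 := TernaryOrthogonal.pow_four_eq_one_or_neg_one hn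
    ((Matrix.mem_orthogonalGroup_iff' n _).mp g.2) h8
  have hdvd : 8 ∣ 4 := hx ▸ orderOf_dvd_of_pow_eq_one ((mk_pow_eq_one_iff 4).mpr h4)
  exact absurd hdvd (by decide)

/-- `PGO₄⁺(3)`, the quotient of `GO₄⁺(3)` (the 4×4 matrices `M` over `𝔽₃` with `Mᵀ·M = 1`)
by its center, contains no element of order 8. -/
theorem PGO4_plus_3_no_element_of_order_eight :
    ∀ x : (Matrix.orthogonalGroup (Fin 4) (ZMod 3)) ⧸
      Subgroup.center (Matrix.orthogonalGroup (Fin 4) (ZMod 3)), orderOf x ≠ 8 :=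
  PGO4_plus_3_no_element_of_order_eight_general (Fintype.card_fin 4).le
end

section
/- Let P = PGO₄⁺(3) be the quotient of GO₄⁺(3) (the group of 4×4 matrices M over 𝔽₃ with Mᵀ·M = 1) by its center. Then P is an (internal) semidirect product (C₂)⁴ ⋊ (𝔖₃ × 𝔖₃): there exist a normal subgroup N of P isomorphic to (ℤ/2ℤ)⁴ and a subgroup H of P isomorphic to 𝔖₃ × 𝔖₃ such that N ∩ H is trivial and N and H together generate P. -/
attribute [local instance] starRingOfComm

/-!
The `24` vectors of norm `1` in `𝔽₃⁴` fall into three orthogonal frames `{±v₁, …, ±v₄}`, and so do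
the `24` vectors of norm `-1`. Permuting the frames of either kind gives a homomorphism
`GO₄⁺(3) → 𝔖₃ × 𝔖₃`. It kills the centre because `𝔖₃ × 𝔖₃` is centreless, and it is split:
permutations of the last three coordinates fix every frame of norm `1` and permute those of norm
`-1`, while a skew involution (a quaternion multiplication) exchanges the two kinds of frames, so
conjugating by it gives the other factor.

An element of the kernel preserves the coordinate frame, so it is monomial; the remaining frames
force its permutation to be a translation of `Fin 4 ≃ 𝔽₂²` and its signs to be a character of
`𝔽₂²` up to a common sign. These are the two-qubit Pauli matrices up to sign, and modulo the centre
they form `𝔽₂² × 𝔽₂²`.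
-/

namespace PGO4Plus3

open Matrix

theorem isCompl_ker_range_of_leftInverse {P Q : Type*} [Group P] [Group Q] {f : P →* Q}
    {s : Q →* P} (h : Function.LeftInverse f s) : IsCompl f.ker s.range := by
  constructor
  · rw [Subgroup.disjoint_def]
    rintro _ hx ⟨y, rfl⟩
    rw [MonoidHom.mem_ker, h] at hx
    rw [hx, map_one]
  · rw [codisjoint_iff, eq_top_iff]
    intro x _
    rw [← inv_mul_cancel_right x (s (f x))]
    refine Subgroup.mul_mem_sup ?_ ⟨_, rfl⟩
    rw [MonoidHom.mem_ker, map_mul, map_inv, h, mul_inv_cancel]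

theorem center_le_ker_of_surjective {G Q : Type*} [Group G] [Group Q] {f : G →* Q}
    (hf : Function.Surjective f) (hQ : Subgroup.center Q = ⊥) : Subgroup.center G ≤ f.ker := by
  intro z hz
  rw [MonoidHom.mem_ker, ← Subgroup.mem_bot, ← hQ, Subgroup.mem_center_iff]
  intro q
  obtain ⟨g, rfl⟩ := hf q
  rw [← map_mul, ← map_mul, Subgroup.mem_center_iff.1 hz]

theorem center_perm_three_prod :
    Subgroup.center (Equiv.Perm (Fin 3) × Equiv.Perm (Fin 3)) = ⊥ := by
  have h : ∀ σ : Equiv.Perm (Fin 3), (∀ τ, τ * σ = σ * τ) → σ = 1 := by decide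
  rw [eq_bot_iff]
  rintro ⟨σ, τ⟩ hz
  rw [Subgroup.mem_center_iff] at hz
  exact Prod.ext (h σ fun ρ => congrArg Prod.fst (hz (ρ, 1)))
    (h τ fun ρ => congrArg Prod.snd (hz (1, ρ)))

theorem nonempty_mulEquiv_pi_zmod_two :
    Nonempty (Multiplicative ((Fin 2 → ZMod 2) × (Fin 2 → ZMod 2)) ≃*
      (Fin 4 → Multiplicative (ZMod 2))) := by
  have e : ((Fin 2 → ZMod 2) × (Fin 2 → ZMod 2)) ≃ₗ[ZMod 2] (Fin 4 → ZMod 2) :=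
    LinearEquiv.ofFinrankEq _ _ (by simp)
  exact ⟨e.toAddEquiv.toMultiplicative.trans (MulEquiv.piMultiplicative _)⟩

section OrthogonalGroup

variable {n R : Type*} [Fintype n] [DecidableEq n] [CommRing R]

theorem orthogonalGroup_dotProduct_mulVec (M : orthogonalGroup n R) (u v : n → R) :
    (M.1 *ᵥ u) ⬝ᵥ (M.1 *ᵥ v) = u ⬝ᵥ v := by
  rw [dotProduct_mulVec, vecMul_mulVec, (mem_orthogonalGroup_iff' n R).1 M.2, vecMul_one]

theorem orthogonalGroup_mk_eq_of_eq_smul {M N : orthogonalGroup n R} {c : R}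
    (h : M.1 = c • N.1) :
    (M : orthogonalGroup n R ⧸ Subgroup.center (orthogonalGroup n R)) = N := by
  rw [eq_comm, QuotientGroup.eq, Subgroup.mem_center_iff]
  have hc : (N⁻¹ * M).1 = c • 1 := by
    change star N.1 * M.1 = _
    rw [h, mul_smul_comm, mem_unitaryGroup_iff'.1 N.2]
  intro K
  refine Subtype.ext ?_
  change K.1 * (N⁻¹ * M).1 = (N⁻¹ * M).1 * K.1
  rw [hc, mul_smul_comm, smul_mul_assoc, mul_one, one_mul]

variable (n R) in
/-- The permutation matrices as elements of the orthogonal group. -/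
def permOrthogonal : Equiv.Perm n →* orthogonalGroup n R :=
  (permMatrixHom : Equiv.Perm n →* Matrix n n R).codRestrict (orthogonalGroup n R) fun σ => by
    rw [mem_orthogonalGroup_iff', permMatrixHom_apply, transpose_permMatrix, ← permMatrix_mul,
      mul_inv_cancel, permMatrix_one]

theorem permOrthogonal_mulVec (σ : Equiv.Perm n) (v : n → R) :
    (permOrthogonal n R σ).1 *ᵥ v = v ∘ σ.symm :=
  permMatrix_mulVec σ⁻¹

/-- Conjugation by a skew-symmetric involution `T`. Since `Tᵀ * T = -1`, such a `T` is not itself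
orthogonal, but it still normalizes the orthogonal group. -/
def conjSkew (T : Matrix n n R) (hskew : Tᵀ = -T) (hsq : T * T = 1) :
    orthogonalGroup n R →* orthogonalGroup n R where
  toFun M := ⟨T * M.1 * T, by
    have hM := (mem_orthogonalGroup_iff' n R).1 M.2
    rw [mem_orthogonalGroup_iff']
    calc (T * M.1 * T)ᵀ * (T * M.1 * T) = T * (M.1ᵀ * (T * T) * M.1) * T := by
          simp only [transpose_mul, hskew, mul_neg, neg_mul, neg_neg, mul_assoc]
      _ = 1 := by rw [hsq, mul_one, hM, mul_one, hsq]⟩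
  map_one' := Subtype.ext (by simp [hsq])
  map_mul' M N := Subtype.ext <| by
    calc T * (M.1 * N.1) * T = T * M.1 * (1 * N.1 * T) := by simp only [one_mul, mul_assoc]
      _ = T * M.1 * T * (T * N.1 * T) := by rw [← hsq]; simp only [mul_assoc]

theorem conjSkew_involutive (T : Matrix n n R) (hskew : Tᵀ = -T) (hsq : T * T = 1) :
    Function.Involutive (conjSkew T hskew hsq) := fun M => Subtype.ext <| by
  calc T * (T * M.1 * T) * T = T * T * M.1 * (T * T) := by simp only [mul_assoc]
    _ = M.1 := by rw [hsq, one_mul, mul_one]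

end OrthogonalGroup

section Pauli

variable {R n ι : Type*} [CommRing R] [Fintype ι]

variable (R) in
/-- The sign `x ↦ (-1) ^ x` as an `R`-valued additive character of `ZMod 2`. -/
def signChar : AddChar (ZMod 2) R := AddChar.zmodChar 2 (neg_one_sq : (-1 : R) ^ 2 = 1)

theorem signChar_mul_self (x : ZMod 2) : signChar R x * signChar R x = 1 := by
  rw [← AddChar.map_add_eq_mul, ZModModule.add_self, AddChar.map_zero_eq_one]

theorem eq_zero_of_signChar_eq_one (hR : (-1 : R) ≠ 1) {x : ZMod 2} (hx : signChar R x = 1) :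
    x = 0 := by
  fin_cases x
  · rfl
  · exact (hR ((pow_one (-1 : R)).symm.trans hx)).elim

theorem eq_zero_of_forall_signChar_dotProduct (hR : (-1 : R) ≠ 1) {a : ι → ZMod 2}
    (h : ∀ b, signChar R (b ⬝ᵥ a) = 1) : a = 0 := by
  classical
  funext i
  simpa using eq_zero_of_signChar_eq_one hR (h (Pi.single i 1))

variable (R) in
/-- The Pauli matrix on `ι` qubits that multiplies by the character `(-1) ^ (b ⬝ᵥ ·)` of
`ι → ZMod 2` and then translates by `a`; the matrix indices are labelled by bit strings via `e`. -/
def pauli (e : n ≃ (ι → ZMod 2)) (a b : ι → ZMod 2) : Matrix n n R :=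
  of fun i j => if e i = e j + a then signChar R (b ⬝ᵥ e j) else 0

variable (e : n ≃ (ι → ZMod 2))

theorem smul_pauli_injective (a b : ι → ZMod 2) :
    Function.Injective fun c : R => c • pauli R e a b := by
  intro c c' h
  simpa [pauli] using congrFun (congrFun h (e.symm a)) (e.symm 0)

theorem transpose_pauli (a b : ι → ZMod 2) :
    (pauli R e a b)ᵀ = signChar R (b ⬝ᵥ a) • pauli R e a b := by
  ext i j
  have hij : e j = e i + a ↔ e i = e j + a := by
    rw [← ZModModule.sub_eq_add, eq_sub_iff_add_eq, eq_comm]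
  simp only [transpose_apply, Matrix.smul_apply, pauli, of_apply, hij, smul_eq_mul, mul_ite,
    mul_zero]
  refine ite_congr rfl (fun h => ?_) fun _ => rfl
  rw [h, dotProduct_add, AddChar.map_add_eq_mul, mul_comm]

theorem pauli_zero_zero [DecidableEq n] : pauli R e 0 0 = 1 := by
  ext i j
  simp [pauli, one_apply]

variable [Fintype n]

theorem pauli_mul_pauli (a b a' b' : ι → ZMod 2) :
    pauli R e a b * pauli R e a' b' =
      signChar R (b ⬝ᵥ a') • pauli R e (a + a') (b + b') := by
  classical
  ext i j
  have hk (k : n) : e k = e j + a' ↔ k = e.symm (e j + a') := e.eq_symm_apply.symm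
  simp only [mul_apply, Matrix.smul_apply, pauli, of_apply, hk, mul_ite, mul_zero, ite_mul,
    zero_mul, Finset.sum_ite_eq', Finset.mem_univ, if_true, Equiv.apply_symm_apply, smul_eq_mul,
    add_comm a a', ← add_assoc]
  refine if_congr Iff.rfl ?_ rfl
  simp only [dotProduct_add, add_dotProduct, AddChar.map_add_eq_mul]
  ring

variable [DecidableEq n]

theorem pauli_mem_orthogonalGroup (a b : ι → ZMod 2) :
    pauli R e a b ∈ orthogonalGroup n R := by
  rw [mem_orthogonalGroup_iff', transpose_pauli, smul_mul_assoc, pauli_mul_pauli, smul_smul,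
    signChar_mul_self, one_smul, ZModModule.add_self, ZModModule.add_self, pauli_zero_zero]

variable (R) in
/-- The Pauli matrices as elements of the orthogonal group. -/
def pauliOrthogonal (a b : ι → ZMod 2) : orthogonalGroup n R :=
  ⟨pauli R e a b, pauli_mem_orthogonalGroup e a b⟩

theorem pauli_mulVec_single (a b : ι → ZMod 2) (j : n) :
    pauli R e a b *ᵥ Pi.single j 1 = signChar R (b ⬝ᵥ e j) • Pi.single (e.symm (e j + a)) 1 := by
  ext i
  simp [pauli, Pi.single_apply, Equiv.eq_symm_apply]

variable (R) in
/-- The Pauli matrices multiply up to sign, so they give a homomorphism to the orthogonal group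
modulo its centre. -/
def pauliHom : Multiplicative ((ι → ZMod 2) × (ι → ZMod 2)) →*
    orthogonalGroup n R ⧸ Subgroup.center (orthogonalGroup n R) :=
  MonoidHom.mk' (fun x => QuotientGroup.mk (pauliOrthogonal R e x.toAdd.1 x.toAdd.2))
    fun x y => by
      rw [← QuotientGroup.mk_mul, eq_comm]
      exact orthogonalGroup_mk_eq_of_eq_smul (pauli_mul_pauli e ..)

theorem pauliHom_injective (hR : (-1 : R) ≠ 1) : Function.Injective (pauliHom R e) := by
  rw [injective_iff_map_eq_one]
  intro x hx
  have hcomm (a b : ι → ZMod 2) : signChar R (b ⬝ᵥ x.toAdd.1) = signChar R (x.toAdd.2 ⬝ᵥ a) := by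
    have h := congrArg Subtype.val <| Subgroup.mem_center_iff.1 ((QuotientGroup.eq_one_iff _).1 hx)
      (pauliOrthogonal R e a b)
    change pauli R e a b * pauli R e _ _ = pauli R e _ _ * pauli R e a b at h
    rw [pauli_mul_pauli, pauli_mul_pauli, add_comm a, add_comm b] at h
    exact smul_pauli_injective e _ _ h
  have ha : x.toAdd.1 = 0 := eq_zero_of_forall_signChar_dotProduct hR fun b => by
    rw [hcomm 0 b, dotProduct_zero, AddChar.map_zero_eq_one]
  have hb : x.toAdd.2 = 0 := eq_zero_of_forall_signChar_dotProduct hR fun a => by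
    rw [dotProduct_comm, ← hcomm a 0, zero_dotProduct, AddChar.map_zero_eq_one]
  exact Prod.ext ha hb

end Pauli

section Frames

/-- The group `GO₄⁺(3)`. -/
abbrev GO4 := orthogonalGroup (Fin 4) (ZMod 3)

/-- The label of the frame that contains a vector `v` of norm `1`, namely the product of its
coordinates: `0` for the coordinate frame `{±eᵢ}` and `±1` for the frames of vectors without zero
coordinates. It carries no meaning for other `v`. -/
def frame (v : Fin 4 → ZMod 3) : ZMod 3 := ∏ i, v i

/-- A representative of the frame of norm `1` with label `k`. -/
def frameVec (k : ZMod 3) : Fin 4 → ZMod 3 := ![1, k, k, k]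

theorem frameVec_dotProduct_self : ∀ k, frameVec k ⬝ᵥ frameVec k = 1 := by decide

theorem frame_frameVec : ∀ k, frame (frameVec k) = k := by decide

theorem frame_eq_frame_iff : ∀ u : Fin 4 → ZMod 3, u ⬝ᵥ u = 1 → ∀ v, v ⬝ᵥ v = 1 →
    (frame u = frame v ↔ u ⬝ᵥ v = 0 ∨ u = v ∨ u = -v) := by
  decide +kernel

theorem frame_mulVec_eq (M : GO4) {u v : Fin 4 → ZMod 3} (hu : u ⬝ᵥ u = 1) (hv : v ⬝ᵥ v = 1)
    (h : frame u = frame v) : frame (M.1 *ᵥ u) = frame (M.1 *ᵥ v) := by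
  have hM := orthogonalGroup_dotProduct_mulVec M
  rw [frame_eq_frame_iff _ (by rw [hM, hu]) _ (by rw [hM, hv]), hM]
  exact ((frame_eq_frame_iff u hu v hv).1 h).imp id <|
    Or.imp (congrArg _) fun h => by rw [h, mulVec_neg]

/-- The action of `GO₄⁺(3)` on the three frames of norm `1`; the labels in `ZMod 3` are read in
`Fin 3`, which is the same type by definition. -/
def unitFrameAction : GO4 →* Equiv.Perm (Fin 3) :=
  MonoidHom.toHomPerm
    { toFun := fun M (k : ZMod 3) => frame (M.1 *ᵥ frameVec k)
      map_one' := funext fun k => by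
        rw [OneMemClass.coe_one, one_mulVec, frame_frameVec]
        rfl
      map_mul' := fun M N => funext fun k => by
        change frame ((M.1 * N.1) *ᵥ _) = frame (M.1 *ᵥ _)
        rw [← mulVec_mulVec]
        refine frame_mulVec_eq M ?_ (frameVec_dotProduct_self _) (frame_frameVec _).symm
        rw [orthogonalGroup_dotProduct_mulVec, frameVec_dotProduct_self] }

theorem unitFrameAction_eq_one_iff {M : GO4} :
    unitFrameAction M = 1 ↔ ∀ u, u ⬝ᵥ u = 1 → frame (M.1 *ᵥ u) = frame u := by
  refine ⟨fun hM u hu => ?_, fun h => Equiv.ext fun (k : ZMod 3) => ?_⟩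
  · rw [frame_mulVec_eq M hu (frameVec_dotProduct_self _) (frame_frameVec _).symm]
    exact Equiv.congr_fun hM (frame u)
  · exact (h _ (frameVec_dotProduct_self k)).trans (frame_frameVec k)

/-- Left multiplication by `j - k` on the quaternions over `𝔽₃`, in the basis `1, i, j, k`. It
changes the sign of the norm, so it exchanges the frames of norm `1` and `-1`; among the quaternions
with this property `j - k` makes the labels match in `unitFrameAction_duality_coordPerm`. -/
def dualityMatrix : Matrix (Fin 4) (Fin 4) (ZMod 3) :=
  !![0, 0, -1, 1; 0, 0, 1, 1; 1, -1, 0, 0; -1, -1, 0, 0]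

theorem transpose_dualityMatrix : dualityMatrixᵀ = -dualityMatrix := by decide

theorem dualityMatrix_mul_self : dualityMatrix * dualityMatrix = 1 := by decide

/-- Conjugation by `dualityMatrix`, which turns the action on the frames of norm `1` into the action
on the frames of norm `-1`. -/
def duality : GO4 →* GO4 :=
  conjSkew dualityMatrix transpose_dualityMatrix dualityMatrix_mul_self

theorem duality_duality (M : GO4) : duality (duality M) = M := conjSkew_involutive ..

theorem duality_mulVec_dualityMatrix_mulVec (M : GO4) (v : Fin 4 → ZMod 3) :
    (duality M).1 *ᵥ (dualityMatrix *ᵥ v) = dualityMatrix *ᵥ (M.1 *ᵥ v) := by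
  rw [mulVec_mulVec, mulVec_mulVec]
  change (dualityMatrix * M.1 * dualityMatrix * dualityMatrix) *ᵥ v = _
  rw [mul_assoc _ dualityMatrix, dualityMatrix_mul_self, mul_one]

/-- The action of `GO₄⁺(3)` on the frames of norm `1` and on the frames of norm `-1`. -/
def frameAction : GO4 →* Equiv.Perm (Fin 3) × Equiv.Perm (Fin 3) :=
  unitFrameAction.prod (unitFrameAction.comp duality)

theorem frameAction_eq_one_iff {M : GO4} :
    frameAction M = 1 ↔ unitFrameAction M = 1 ∧ unitFrameAction (duality M) = 1 := Prod.ext_iff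

end Frames

section Splitting

/-- The permutations of the last three coordinates, as elements of `GO₄⁺(3)`. -/
def coordPerm : Equiv.Perm (Fin 3) →* GO4 :=
  (permOrthogonal (Fin 4) (ZMod 3)).comp
    (Equiv.Perm.extendDomainHom (finSuccAboveEquiv (0 : Fin 4)))

theorem unitFrameAction_coordPerm (τ : Equiv.Perm (Fin 3)) : unitFrameAction (coordPerm τ) = 1 :=
  unitFrameAction_eq_one_iff.2 fun u _ => by
    refine (congrArg frame (permOrthogonal_mulVec _ u)).trans ?_
    exact Equiv.prod_comp _ u

theorem unitFrameAction_duality_coordPerm :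
    ∀ σ : Equiv.Perm (Fin 3), unitFrameAction (duality (coordPerm σ)) = σ := by
  decide +kernel

theorem commute_duality_coordPerm : ∀ σ τ : Equiv.Perm (Fin 3),
    Commute (duality (coordPerm σ)) (coordPerm τ) := by
  have h : ∀ σ τ : Equiv.Perm (Fin 3), (duality (coordPerm σ)).1 * (coordPerm τ).1 =
      (coordPerm τ).1 * (duality (coordPerm σ)).1 := by
    decide +kernel
  exact fun σ τ => Subtype.ext (h σ τ)

/-- The splitting of `frameAction`. -/
def frameLift : Equiv.Perm (Fin 3) × Equiv.Perm (Fin 3) →* GO4 :=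
  MonoidHom.noncommCoprod (duality.comp coordPerm) coordPerm commute_duality_coordPerm

theorem frameAction_frameLift : Function.LeftInverse frameAction frameLift := by
  rintro ⟨σ, τ⟩
  change (unitFrameAction (duality (coordPerm σ) * coordPerm τ),
    unitFrameAction (duality (duality (coordPerm σ) * coordPerm τ))) = (σ, τ)
  rw [map_mul, map_mul, map_mul, duality_duality, unitFrameAction_coordPerm,
    unitFrameAction_coordPerm, unitFrameAction_duality_coordPerm,
    unitFrameAction_duality_coordPerm, mul_one, one_mul]

end Splitting

section Kernel

/-- Binary digits, labelling the four coordinates by `𝔽₂²`. -/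
abbrev bits : Fin 4 ≃ (Fin 2 → ZMod 2) :=
  (finFunctionFinEquiv : (Fin 2 → Fin 2) ≃ Fin (2 ^ 2)).symm

theorem frameAction_pauliOrthogonal :
    ∀ a b, frameAction (pauliOrthogonal (ZMod 3) bits a b) = 1 := by
  decide +kernel

theorem exists_eq_smul_single_of_frame_eq_zero : ∀ u : Fin 4 → ZMod 3, u ⬝ᵥ u = 1 → frame u = 0 →
    ∃ i, ∃ c : ZMod 3, c * c = 1 ∧ u = c • Pi.single i 1 := by
  decide +kernel

theorem exists_mulVec_single_eq_smul_single {M : GO4} (hM : unitFrameAction M = 1) (j : Fin 4) :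
    ∃ i, ∃ c : ZMod 3, c * c = 1 ∧ M.1 *ᵥ Pi.single j 1 = c • Pi.single i 1 := by
  have he : (Pi.single j 1 : Fin 4 → ZMod 3) ⬝ᵥ Pi.single j 1 = 1 := by simp
  refine exists_eq_smul_single_of_frame_eq_zero _ ?_ ?_
  · rw [orthogonalGroup_dotProduct_mulVec, he]
  · rw [unitFrameAction_eq_one_iff.1 hM _ he]
    revert j
    decide

theorem frame_mulVec_eq_of_unitFrameAction_duality_eq_one {M : GO4}
    (hM : unitFrameAction (duality M) = 1) {v : Fin 4 → ZMod 3} (hv : v ⬝ᵥ v = -1) :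
    frame (dualityMatrix *ᵥ (M.1 *ᵥ v)) = frame (dualityMatrix *ᵥ v) := by
  rw [← duality_mulVec_dualityMatrix_mulVec]
  refine unitFrameAction_eq_one_iff.1 hM _ ?_
  rw [dotProduct_mulVec, vecMul_mulVec, transpose_dualityMatrix, neg_mul, dualityMatrix_mul_self,
    vecMul_neg, vecMul_one, neg_dotProduct, hv, neg_neg]

theorem eq_of_frame_dualityMatrix_mulVec_eq : ∀ c : ZMod 3, c * c = 1 → ∀ d : ZMod 3, d * d = 1 →
    ∀ i : Fin 4, i ≠ 0 → ∀ j : Fin 4, j ≠ 0 →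
    frame (dualityMatrix *ᵥ (c • Pi.single 0 1 + d • Pi.single j 1)) =
      frame (dualityMatrix *ᵥ (Pi.single 0 1 + Pi.single i 1)) → j = i := by
  decide +kernel

theorem exists_diagonal_eq_smul_pauli : ∀ d : Fin 4 → ZMod 3, ∏ i, d i = 1 →
    ∃ (c : ZMod 3) (b : Fin 2 → ZMod 2), diagonal d = c • pauli (ZMod 3) bits 0 b := by
  decide +kernel

theorem exists_mulVec_single_eq_smul_self {M : GO4} (hM : frameAction M = 1) {c : ZMod 3}
    (hc : c * c = 1) (h0 : M.1 *ᵥ Pi.single 0 1 = c • Pi.single 0 1) (i : Fin 4) :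
    ∃ d : ZMod 3, M.1 *ᵥ Pi.single i 1 = d • Pi.single i 1 := by
  rw [frameAction_eq_one_iff] at hM
  obtain rfl | hi := eq_or_ne i 0
  · exact ⟨c, h0⟩
  obtain ⟨j, d, hd, hj⟩ := exists_mulVec_single_eq_smul_single hM.1 i
  have hj0 : j ≠ 0 := by
    rintro rfl
    have h := orthogonalGroup_dotProduct_mulVec M (Pi.single 0 1) (Pi.single i 1)
    rw [h0, hj, smul_dotProduct, dotProduct_smul, single_one_dotProduct, single_one_dotProduct,
      Pi.single_eq_same, Pi.single_eq_of_ne hi.symm, smul_eq_mul, smul_eq_mul, mul_one] at h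
    exact mul_ne_zero (left_ne_zero_of_mul_eq_one hc) (left_ne_zero_of_mul_eq_one hd) h
  have hnorm : ∀ i : Fin 4, i ≠ 0 → (Pi.single 0 1 + Pi.single i 1 : Fin 4 → ZMod 3) ⬝ᵥ
      (Pi.single 0 1 + Pi.single i 1) = -1 := by decide
  have hsum := frame_mulVec_eq_of_unitFrameAction_duality_eq_one hM.2 (hnorm i hi)
  rw [mulVec_add, h0, hj] at hsum
  rw [hj, eq_of_frame_dualityMatrix_mulVec_eq c hc d hd i hi j hj0 hsum]
  exact ⟨d, rfl⟩

theorem exists_eq_smul_pauli_of_mulVec_single_zero {M : GO4} (hM : frameAction M = 1)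
    {c : ZMod 3} (hc : c * c = 1) (h0 : M.1 *ᵥ Pi.single 0 1 = c • Pi.single 0 1) :
    ∃ (c : ZMod 3) (b : Fin 2 → ZMod 2), M.1 = c • pauli (ZMod 3) bits 0 b := by
  choose d hd using exists_mulVec_single_eq_smul_self hM hc h0
  have hdiag : M.1 = diagonal d := ext_of_mulVec_single fun i => by
    rw [hd, diagonal_mulVec_single, mul_one, ← Pi.single_smul, smul_eq_mul, mul_one]
  have hprod : ∏ i, d i = 1 := by
    have h := unitFrameAction_eq_one_iff.1 (frameAction_eq_one_iff.1 hM).1 1 (by decide)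
    simpa [frame, hdiag, mulVec_diagonal] using h
  rw [hdiag]
  exact exists_diagonal_eq_smul_pauli d hprod

theorem exists_eq_smul_pauli {M : GO4} (hM : frameAction M = 1) :
    ∃ (c : ZMod 3) (a b : Fin 2 → ZMod 2), M.1 = c • pauli (ZMod 3) bits a b := by
  obtain ⟨i, c, hc, hi⟩ := exists_mulVec_single_eq_smul_single (frameAction_eq_one_iff.1 hM).1 0
  set a := bits i + bits 0 with ha
  have hfix : (pauliOrthogonal (ZMod 3) bits a 0 * M).1 *ᵥ Pi.single 0 1 = c • Pi.single 0 1 := by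
    change (pauli (ZMod 3) bits a 0 * M.1) *ᵥ _ = _
    rw [← mulVec_mulVec, hi, mulVec_smul, pauli_mulVec_single, zero_dotProduct,
      AddChar.map_zero_eq_one, one_smul, ha, ← add_assoc, ZModModule.add_self, zero_add,
      Equiv.symm_apply_apply]
  obtain ⟨d, b, hd⟩ := exists_eq_smul_pauli_of_mulVec_single_zero
    (by rw [map_mul, frameAction_pauliOrthogonal, hM, one_mul]) hc hfix
  refine ⟨d, a, b, ?_⟩
  calc M.1 = pauli (ZMod 3) bits a 0 * (pauliOrthogonal (ZMod 3) bits a 0 * M).1 := by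
        change _ = pauli (ZMod 3) bits a 0 * (pauli (ZMod 3) bits a 0 * M.1)
        rw [← mul_assoc, pauli_mul_pauli, zero_dotProduct, AddChar.map_zero_eq_one, one_smul,
          ZModModule.add_self, ZModModule.add_self, pauli_zero_zero, one_mul]
    _ = d • pauli (ZMod 3) bits a b := by
        rw [hd, mul_smul_comm, pauli_mul_pauli, zero_dotProduct, AddChar.map_zero_eq_one, one_smul,
          add_zero, zero_add]

end Kernel

section Projective

/-- The group `PGO₄⁺(3)`. -/
abbrev PGO4 := GO4 ⧸ Subgroup.center GO4

/-- The action of `PGO₄⁺(3)` on the frames of norm `1` and `-1`. -/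
def projFrameAction : PGO4 →* Equiv.Perm (Fin 3) × Equiv.Perm (Fin 3) :=
  QuotientGroup.lift _ frameAction <|
    center_le_ker_of_surjective frameAction_frameLift.surjective center_perm_three_prod

/-- The splitting of `projFrameAction`. -/
def projFrameLift : Equiv.Perm (Fin 3) × Equiv.Perm (Fin 3) →* PGO4 :=
  (QuotientGroup.mk' _).comp frameLift

theorem projFrameAction_projFrameLift :
    Function.LeftInverse projFrameAction projFrameLift :=
  frameAction_frameLift

theorem ker_projFrameAction : projFrameAction.ker = (pauliHom (ZMod 3) bits).range := by
  ext y
  constructor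
  · obtain ⟨M, rfl⟩ := QuotientGroup.mk_surjective y
    intro hM
    obtain ⟨c, a, b, h⟩ := exists_eq_smul_pauli (M := M) hM
    exact ⟨.ofAdd (a, b), (orthogonalGroup_mk_eq_of_eq_smul h).symm⟩
  · rintro ⟨x, rfl⟩
    exact frameAction_pauliOrthogonal _ _

end Projective

end PGO4Plus3

open PGO4Plus3

/-- `PGO₄⁺(3)` is an internal semidirect product `(C₂)⁴ ⋊ (𝔖₃ × 𝔖₃)`: it has a normal
subgroup `N ≅ (ℤ/2ℤ)⁴` and a subgroup `H ≅ 𝔖₃ × 𝔖₃` with `N ⊓ H = ⊥` and `N ⊔ H = ⊤`. -/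
theorem PGO4_plus_3_semidirect_product :
    ∃ (N H : Subgroup ((Matrix.orthogonalGroup (Fin 4) (ZMod 3)) ⧸
        Subgroup.center (Matrix.orthogonalGroup (Fin 4) (ZMod 3)))),
      N.Normal ∧
      Nonempty (N ≃* (Fin 4 → Multiplicative (ZMod 2))) ∧
      Nonempty (H ≃* Equiv.Perm (Fin 3) × Equiv.Perm (Fin 3)) ∧
      N ⊓ H = ⊥ ∧ N ⊔ H = ⊤ := by
  have hcompl := isCompl_ker_range_of_leftInverse projFrameAction_projFrameLift
  refine ⟨projFrameAction.ker, projFrameLift.range, inferInstance, ?_, ?_,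
    hcompl.inf_eq_bot, hcompl.sup_eq_top⟩
  · obtain ⟨e⟩ := nonempty_mulEquiv_pi_zmod_two
    rw [ker_projFrameAction]
    exact ⟨(MonoidHom.ofInjective (pauliHom_injective bits (by decide))).symm.trans e⟩
  · exact ⟨(MonoidHom.ofInjective projFrameAction_projFrameLift.injective).symm⟩
end

section
/- Let P = PGO₄⁺(3) be the quotient of GO₄⁺(3) (the group of 4×4 matrices M over 𝔽₃ with Mᵀ·M = 1) by its center. Then there exists a normal subgroup N of P isomorphic to (ℤ/2ℤ)⁴ such that every nontrivial normal subgroup of P contains N; that is, the socle of PGO₄⁺(3) is isomorphic to (C₂)⁴ and is contained in every nontrivial normal subgroup. -/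
attribute [local instance] starRingOfComm

/-!
Label the four coordinates by `𝔽₂²`. The sixteen real Pauli matrices, which are the translations
of `𝔽₂²` twisted by its characters, multiply up to sign like their labels, so their classes form a
subgroup `N ≅ (ℤ/2ℤ)⁴`. The Pauli matrices span all matrices, and therefore a matrix commuting up
to scalars with each of them is a multiple of one of them: `N` is its own centralizer.

`N` is normal because the skew-symmetric orthogonal matrices over `𝔽₃` are, up to sign, exactly
the six skew-symmetric Pauli matrices. Orthogonal conjugation preserves this set, and its image
generates `N`. `N` is a minimal normal subgroup: diagonal sign matrices of quadratic forms shift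
the character label, the Hadamard matrix (orthogonal since `4 = 1` in `𝔽₃`) exchanges the two
labels, and the permutation matrices of linear automorphisms move the nonzero translations
transitively.

A nontrivial normal subgroup meeting `N` trivially would centralize `N`, hence lie in `N`; so it
meets `N`, and contains it by minimality.
-/

open Matrix

section NormalSubgroups

variable {G : Type*} [Group G] {N K : Subgroup G}

theorem le_of_minimal_normal_of_centralizer_le [N.Normal] [K.Normal]
    (hcentralizer : Subgroup.centralizer N ≤ N)
    (hminimal : ∀ M : Subgroup G, M.Normal → M ≤ N → M ≠ ⊥ → N ≤ M) (hK : K ≠ ⊥) : N ≤ K := by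
  suffices h : K ⊓ N ≠ ⊥ from (hminimal _ inferInstance inf_le_right h).trans inf_le_left
  intro hKN
  have hcomm : K ≤ Subgroup.centralizer N := fun k hk ↦ Subgroup.mem_centralizer_iff.2 fun n hn ↦
    (Subgroup.commute_of_normal_of_disjoint K N ‹_› ‹_› (disjoint_iff.2 hKN) k n hk hn).eq.symm
  exact hK (by rwa [inf_eq_left.2 (hcomm.trans hcentralizer)] at hKN)

end NormalSubgroups

section SignChar

variable (R : Type*) [CommRing R]

/-- The additive character `a ↦ (-1) ^ a` of `𝔽₂` with values in `R`. -/
def signChar : AddChar (ZMod 2) R :=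
  AddChar.zmodChar 2 (neg_one_sq (R := R))

theorem signChar_one : signChar R 1 = -1 := by
  simp [signChar, AddChar.zmodChar_apply, ZMod.val_one]

theorem signChar_mul_self (a : ZMod 2) : signChar R a * signChar R a = 1 := by
  rw [← AddChar.map_add_eq_mul, CharTwo.add_self_eq_zero, AddChar.map_zero_eq_one]

theorem signChar_eq_one_iff [NeZero (2 : R)] {a : ZMod 2} : signChar R a = 1 ↔ a = 0 := by
  refine ⟨fun h ↦ (Fin.exists_fin_two.1 ⟨a, rfl⟩).resolve_right ?_, ?_⟩
  · rintro rfl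
    have h : (-1 : R) = 1 := signChar_one R ▸ h
    exact two_ne_zero (α := R) (by linear_combination -h)
  · rintro rfl
    exact AddChar.map_zero_eq_one _

variable {ι : Type*} [Fintype ι]

theorem sum_signChar_dotProduct [DecidableEq ι] [IsDomain R] [NeZero (2 : R)] (u : ι → ZMod 2) :
    ∑ s : ι → ZMod 2, signChar R (s ⬝ᵥ u) = if u = 0 then 2 ^ Fintype.card ι else 0 := by
  split_ifs with hu
  · simp [hu]
  obtain ⟨i, hi⟩ := Function.ne_iff.1 hu
  -- Translation by the `i`-th basis vector changes the sign of every summand.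
  have hneg : ∑ s, signChar R (s ⬝ᵥ u) = -∑ s, signChar R (s ⬝ᵥ u) := by
    rw [← Finset.sum_neg_distrib]
    refine Fintype.sum_equiv (Equiv.addRight (Pi.single i 1)) _ _ fun s ↦ ?_
    have hui : u i = 1 := Fin.eq_one_of_ne_zero (u i) hi
    rw [Equiv.coe_addRight, add_dotProduct, single_one_dotProduct, hui, AddChar.map_add_eq_mul,
      signChar_one, mul_neg_one, neg_neg]
  exact (mul_eq_zero.1 ((two_mul _).trans (eq_neg_iff_add_eq_zero.1 hneg))).resolve_left two_ne_zero

end SignChar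

theorem zmodTwo_eq_add_comm {V : Type*} [AddCommGroup V] [Module (ZMod 2) V] {x y t : V} :
    x = y + t ↔ y = x + t := by
  rw [← ZModModule.sub_eq_add x, eq_sub_iff_add_eq, eq_comm]

theorem exists_linearEquiv_apply_eq {K V : Type*} [DivisionRing K] [AddCommGroup V] [Module K V]
    {x y : V} (hx : x ≠ 0) (hy : y ≠ 0) : ∃ A : V ≃ₗ[K] V, A x = y := by
  obtain ⟨A, hA⟩ := Submodule.exists_linearEquiv_restrict_eq
    ((LinearEquiv.toSpanNonzeroSingleton K V x hx).symm ≪≫ₗ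
      LinearEquiv.toSpanNonzeroSingleton K V y hy)
  have hAx := hA (LinearEquiv.toSpanNonzeroSingleton K V x hx 1)
  rw [LinearEquiv.trans_apply, LinearEquiv.symm_apply_apply] at hAx
  exact ⟨A, by simpa using hAx.symm⟩

theorem exists_polarization_ne_zero {ι R : Type*} [Fintype ι] [Nontrivial ι] [CommRing R]
    {t : ι → R} (ht : t ≠ 0) :
    ∃ (Q : (ι → R) → R) (b : ι → R), b ≠ 0 ∧ ∀ u, Q (u + t) = Q u + Q t + b ⬝ᵥ u := by
  classical
  obtain ⟨i, hi⟩ := Function.ne_iff.1 ht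
  obtain ⟨j, hji⟩ := exists_ne i
  refine ⟨fun u ↦ u i * u j, Pi.single i (t j) + Pi.single j (t i), fun hb ↦ hi ?_, fun u ↦ ?_⟩
  · simpa [hji] using congr_fun hb j
  · simp only [Pi.add_apply, add_dotProduct, single_dotProduct]
    ring

section Pauli

variable {ι m R : Type*} [Fintype ι] [CommRing R] (e : m ≃ (ι → ZMod 2))
  (v w : (ι → ZMod 2) × (ι → ZMod 2))

variable (R) in
/-- The real Pauli matrix attached to `v = (s, t)`: rows and columns are labelled by `𝔽₂ⁿ` through
`e`, and the row `u` has its only nonzero entry `(-1) ^ (s ⬝ᵥ u)` in the column `u + t`. -/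
def pauli : Matrix m m R :=
  of fun i j ↦ if e j = e i + v.2 then signChar R (v.1 ⬝ᵥ e i) else 0

theorem pauli_apply (i j : m) :
    pauli R e v i j = if e j = e i + v.2 then signChar R (v.1 ⬝ᵥ e i) else 0 :=
  rfl

theorem pauli_zero [DecidableEq m] : pauli R e 0 = 1 := by
  ext i j
  simp [pauli_apply, one_apply, eq_comm]

theorem pauli_transpose : (pauli R e v)ᵀ = signChar R (v.1 ⬝ᵥ v.2) • pauli R e v := by
  ext i j
  rw [transpose_apply, Matrix.smul_apply, pauli_apply, pauli_apply, smul_eq_mul, mul_ite, mul_zero]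
  refine if_ctx_congr zmodTwo_eq_add_comm (fun h ↦ ?_) fun _ ↦ rfl
  rw [h, dotProduct_add, AddChar.map_add_eq_mul, mul_comm]

theorem eq_zero_of_pauli_eq_smul_one [DecidableEq m] [NeZero (2 : R)] {c : R}
    (h : pauli R e v = c • 1) : v = 0 := by
  have hentry (u t : ι → ZMod 2) :
      (if t = u + v.2 then signChar R (v.1 ⬝ᵥ u) else 0) = if u = t then c else 0 := by
    simpa [pauli_apply, one_apply] using congr_fun₂ h (e.symm u) (e.symm t)
  have hv2c : v.2 = 0 ∧ c = 1 := by
    have h0 : 1 = if 0 = v.2 then c else 0 := by simpa using hentry 0 v.2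
    have : Nontrivial R := ⟨2, 0, two_ne_zero⟩
    split_ifs at h0 with hv2
    · exact ⟨hv2.symm, h0.symm⟩
    · exact absurd h0 one_ne_zero
  obtain ⟨hv2, rfl⟩ := hv2c
  refine Prod.ext (dotProduct_eq_zero_iff.1 fun u ↦ ?_) hv2
  exact (signChar_eq_one_iff R).1 (by simpa [hv2] using hentry u u)

theorem sum_signChar_smul_pauli [DecidableEq m] [DecidableEq ι] [IsDomain R] [NeZero (2 : R)]
    (i j : m) :
    ∑ s, signChar R (s ⬝ᵥ e i) • pauli R e (s, e i + e j) =
      (2 ^ Fintype.card ι : R) • single i j 1 := by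
  ext k l
  calc (∑ s, signChar R (s ⬝ᵥ e i) • pauli R e (s, e i + e j)) k l
    _ = if e l = e k + (e i + e j) then ∑ s, signChar R (s ⬝ᵥ (e i + e k)) else 0 := by
      simp [Matrix.sum_apply, pauli_apply, AddChar.map_add_eq_mul]
    _ = ((2 ^ Fintype.card ι : R) • single i j 1) k l := by
      rw [sum_signChar_dotProduct, Matrix.smul_apply, single_apply, smul_eq_mul, mul_ite, mul_one,
        mul_zero, ← ite_and]
      refine if_congr (and_comm.trans ?_) rfl rfl
      rw [← ZModModule.sub_eq_add (e i) (e k), sub_eq_zero, e.apply_eq_iff_eq]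
      refine and_congr_right ?_
      rintro rfl
      rw [← add_assoc, ZModModule.add_self, zero_add, e.apply_eq_iff_eq, eq_comm]

variable [Fintype m]

theorem pauli_mul_apply (A : Matrix m m R) (i j : m) :
    (pauli R e v * A) i j = signChar R (v.1 ⬝ᵥ e i) * A (e.symm (e i + v.2)) j := by
  classical
  simp [mul_apply, pauli_apply, ite_mul, ← e.eq_symm_apply]

theorem mul_pauli_apply (A : Matrix m m R) (i j : m) :
    (A * pauli R e v) i j =
      A i (e.symm (e j + v.2)) * signChar R (v.1 ⬝ᵥ (e j + v.2)) := by
  classical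
  have hlabel (k : m) : e j = e k + v.2 ↔ k = e.symm (e j + v.2) := by
    rw [e.eq_symm_apply, zmodTwo_eq_add_comm]
  simp [mul_apply, pauli_apply, hlabel]

theorem pauli_mul : pauli R e v * pauli R e w = signChar R (v.2 ⬝ᵥ w.1) • pauli R e (v + w) := by
  ext i j
  rw [pauli_mul_apply, Matrix.smul_apply, pauli_apply, pauli_apply, smul_eq_mul]
  simp only [e.apply_symm_apply, Prod.fst_add, Prod.snd_add, add_assoc, mul_ite, mul_zero,
    add_dotProduct, dotProduct_add, AddChar.map_add_eq_mul, dotProduct_comm v.2]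
  congr 1
  ring

theorem pauli_mul_comm :
    pauli R e v * pauli R e w =
      signChar R (v.2 ⬝ᵥ w.1 + w.2 ⬝ᵥ v.1) • (pauli R e w * pauli R e v) := by
  rw [pauli_mul, pauli_mul, smul_smul, AddChar.map_add_eq_mul, mul_assoc, signChar_mul_self,
    mul_one, add_comm w]

theorem pauli_mul_transpose [DecidableEq m] : pauli R e v * (pauli R e v)ᵀ = 1 := by
  rw [pauli_transpose, mul_smul_comm, pauli_mul, smul_smul, dotProduct_comm, signChar_mul_self,
    one_smul, ZModModule.add_self, pauli_zero]

theorem transpose_mul_pauli [DecidableEq m] : (pauli R e v)ᵀ * pauli R e v = 1 :=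
  mul_eq_one_comm.1 (pauli_mul_transpose e v)

variable [IsDomain R] [NeZero (2 : R)]

theorem eq_zero_of_trace_pauli_mul_eq_zero {A : Matrix m m R}
    (h : ∀ v, trace (pauli R e v * A) = 0) : A = 0 := by
  classical
  ext i j
  have hsum : (2 ^ Fintype.card ι : R) * A i j = 0 := by
    calc (2 ^ Fintype.card ι : R) * A i j
      _ = trace (((2 ^ Fintype.card ι : R) • single j i 1) * A) := by simp [trace_single_mul]
      _ = 0 := by
        simp [← sum_signChar_smul_pauli e, Finset.sum_mul, trace_sum, h]
  exact (mul_eq_zero.1 hsum).resolve_left (pow_ne_zero _ two_ne_zero)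

theorem exists_eq_smul_one_of_commute_pauli [DecidableEq m] {A : Matrix m m R}
    (h : ∀ v, Commute (pauli R e v) A) : ∃ c : R, A = c • 1 := by
  classical
  have hsingle (i j : m) : Commute (single i j 1) A := by
    have hsum : Commute ((2 ^ Fintype.card ι : R) • single i j 1) A := by
      rw [← sum_signChar_smul_pauli e]
      exact Commute.sum_left _ _ _ fun s _ ↦ (h _).smul_left _
    exact smul_right_injective _ (pow_ne_zero (Fintype.card ι) (two_ne_zero (α := R)))
      (by simpa only [smul_mul_assoc, mul_smul_comm] using hsum.eq)
  obtain ⟨c, rfl⟩ := mem_range_scalar_iff_commute_single'.2 hsingle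
  exact ⟨c, by simp [smul_one_eq_diagonal]⟩

theorem exists_eq_smul_pauli {A : Matrix m m R}
    (h : ∀ v, ∃ c : R, pauli R e v * A = c • (A * pauli R e v)) :
    ∃ (c : R) (w : _), A = c • pauli R e w := by
  classical
  by_cases hA : A = 0
  · exact ⟨0, 0, by rw [hA, zero_smul]⟩
  obtain ⟨w, hw⟩ : ∃ w, trace (pauli R e w * A) ≠ 0 := by
    by_contra! hzero
    exact hA (eq_zero_of_trace_pauli_mul_eq_zero e hzero)
  -- `pauli w * A` also commutes with every Pauli matrix up to a scalar; since its trace is nonzero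
  -- and invariant under conjugation, that scalar is `1`.
  have hcomm (v) : Commute (pauli R e v) (pauli R e w * A) := by
    obtain ⟨c, hc⟩ : ∃ c : R,
        pauli R e v * (pauli R e w * A) = c • (pauli R e w * A * pauli R e v) := by
      obtain ⟨c, hc⟩ := h v
      refine ⟨signChar R (v.2 ⬝ᵥ w.1 + w.2 ⬝ᵥ v.1) * c, ?_⟩
      rw [← mul_assoc, pauli_mul_comm, smul_mul_assoc, mul_assoc, hc, mul_smul_comm, smul_smul,
        mul_assoc]
    have htrace : trace (pauli R e w * A) = c * trace (pauli R e w * A) :=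
      calc trace (pauli R e w * A)
        _ = trace ((pauli R e v)ᵀ * (pauli R e v * (pauli R e w * A))) := by
          rw [← mul_assoc, transpose_mul_pauli, one_mul]
        _ = c * trace (pauli R e w * A) := by
          rw [hc, mul_smul_comm, trace_smul, smul_eq_mul, trace_mul_comm, mul_assoc,
            pauli_mul_transpose, mul_one]
    have hc1 : c = 1 := (mul_eq_right₀ hw).1 htrace.symm
    rwa [hc1, one_smul] at hc
  obtain ⟨c, hc⟩ := exists_eq_smul_one_of_commute_pauli e hcomm
  refine ⟨c * signChar R (w.1 ⬝ᵥ w.2), w, ?_⟩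
  rw [mul_smul, ← pauli_transpose, ← mul_one (pauli R e w)ᵀ, ← mul_smul_comm, ← hc, ← mul_assoc,
    transpose_mul_pauli, one_mul]

end Pauli

section ProjectiveOrthogonalGroup

variable {m R : Type*} [Fintype m] [DecidableEq m] [CommRing R]

variable (m R) in
/-- The projective orthogonal group of the form `∑ xᵢ²`; over `𝔽₃` in dimension four this form has
plus type, and the group is `PGO₄⁺(3)`. -/
abbrev PGO : Type _ :=
  orthogonalGroup m R ⧸ Subgroup.center (orthogonalGroup m R)

theorem PGO.mk_eq_mk_of_eq_smul {g h : orthogonalGroup m R} {c : R}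
    (hgh : (g : Matrix m m R) = c • (h : Matrix m m R)) : (g : PGO m R) = h := by
  refine (QuotientGroup.eq.2 (Subgroup.mem_center_iff.2 fun x ↦ Subtype.ext ?_)).symm
  have hscalar : ((h⁻¹ * g : orthogonalGroup m R) : Matrix m m R) = c • 1 := by
    rw [Submonoid.coe_mul, hgh, mul_smul_comm, ← Submonoid.coe_mul, inv_mul_cancel,
      Submonoid.coe_one]
  change (x : Matrix m m R) * (h⁻¹ * g : orthogonalGroup m R) =
    (h⁻¹ * g : orthogonalGroup m R) * (x : Matrix m m R)
  rw [hscalar, mul_smul_one, smul_one_mul]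

variable {ι : Type*} (e : m ≃ (ι → ZMod 2))

section PauliHom

variable [Fintype ι]

variable (R) in
/-- `pauli R e v` as an element of the orthogonal group. -/
def pauliOrthogonal (v : (ι → ZMod 2) × (ι → ZMod 2)) : orthogonalGroup m R :=
  ⟨pauli R e v, (mem_orthogonalGroup_iff m R).2 (pauli_mul_transpose e v)⟩

variable (R) in
/-- The classes of the Pauli matrices, as a homomorphism: Pauli matrices multiply by adding their
labels, up to a sign. -/
def pauliHom : Multiplicative ((ι → ZMod 2) × (ι → ZMod 2)) →* PGO m R :=
  MonoidHom.mk' (fun v ↦ (pauliOrthogonal R e v.toAdd : PGO m R)) fun v w ↦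
    (PGO.mk_eq_mk_of_eq_smul (h := pauliOrthogonal R e (v * w).toAdd)
      (pauli_mul e v.toAdd w.toAdd)).symm

theorem mk_mul_pauliHom_mul_inv (g : orthogonalGroup m R) {c : R}
    {v w : (ι → ZMod 2) × (ι → ZMod 2)}
    (h : (g : Matrix m m R) * pauli R e v = c • (pauli R e w * (g : Matrix m m R))) :
    (g : PGO m R) * pauliHom R e (.ofAdd v) * (g : PGO m R)⁻¹ = pauliHom R e (.ofAdd w) :=
  mul_inv_eq_iff_eq_mul.2 (PGO.mk_eq_mk_of_eq_smul (g := g * pauliOrthogonal R e v)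
    (h := pauliOrthogonal R e w * g) h)

end PauliHom

variable [IsDomain R] [NeZero (2 : R)]

include e in
theorem exists_eq_smul_of_mk_eq_mk [Finite ι] {g h : orthogonalGroup m R}
    (hgh : (g : PGO m R) = h) : ∃ c : R, (g : Matrix m m R) = c • (h : Matrix m m R) := by
  have := Fintype.ofFinite ι
  have hcenter := Subgroup.mem_center_iff.1 (QuotientGroup.eq.1 hgh.symm)
  obtain ⟨c, hc⟩ := exists_eq_smul_one_of_commute_pauli e fun v ↦
    congr_arg Subtype.val (hcenter (pauliOrthogonal R e v))
  exact ⟨c, by rw [← mul_smul_one, ← hc, ← Submonoid.coe_mul, mul_inv_cancel_left]⟩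

variable [Fintype ι]

theorem pauliHom_injective : Function.Injective (pauliHom R e) := by
  refine (injective_iff_map_eq_one _).2 fun v hv ↦ ?_
  obtain ⟨c, hc⟩ := exists_eq_smul_of_mk_eq_mk e (g := pauliOrthogonal R e v.toAdd) (h := 1) hv
  exact eq_zero_of_pauli_eq_smul_one e _ hc

theorem centralizer_range_pauliHom_le :
    Subgroup.centralizer (pauliHom R e).range ≤ (pauliHom R e).range := by
  intro x hx
  obtain ⟨g, rfl⟩ := QuotientGroup.mk_surjective x
  obtain ⟨c, w, hg⟩ := exists_eq_smul_pauli e (A := g.1) fun v ↦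
    exists_eq_smul_of_mk_eq_mk e (g := pauliOrthogonal R e v * g) (h := g * pauliOrthogonal R e v)
      (Subgroup.mem_centralizer_iff.1 hx _ ⟨.ofAdd v, rfl⟩)
  exact ⟨.ofAdd w, (PGO.mk_eq_mk_of_eq_smul (h := pauliOrthogonal R e w) hg).symm⟩

end ProjectiveOrthogonalGroup

section CliffordElements

variable {ι m R : Type*} [Fintype ι] [Fintype m] [CommRing R]
  (e : m ≃ (ι → ZMod 2))

theorem diagonal_signChar_mem_orthogonalGroup [DecidableEq m] (Q : m → ZMod 2) :
    diagonal (fun i ↦ signChar R (Q i)) ∈ orthogonalGroup m R := by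
  rw [mem_orthogonalGroup_iff, diagonal_transpose, diagonal_mul_diagonal]
  simp only [signChar_mul_self, diagonal_one]

theorem diagonal_signChar_mul_pauli [DecidableEq m] (Q : (ι → ZMod 2) → ZMod 2) {t b : ι → ZMod 2}
    (hQ : ∀ u, Q (u + t) = Q u + Q t + b ⬝ᵥ u) (s : ι → ZMod 2) :
    diagonal (fun i ↦ signChar R (Q (e i))) * pauli R e (s, t) =
      signChar R (Q t) •
        (pauli R e (s + b, t) * diagonal (fun i ↦ signChar R (Q (e i)))) := by
  ext i j
  rw [diagonal_mul, Matrix.smul_apply, pauli_mul_apply, diagonal_apply, pauli_apply]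
  simp only [e.symm_apply_eq, e.apply_symm_apply, smul_eq_mul, mul_ite, mul_zero]
  refine if_congr eq_comm ?_ rfl
  rw [hQ, add_dotProduct, AddChar.map_add_eq_mul, AddChar.map_add_eq_mul, AddChar.map_add_eq_mul]
  linear_combination (-signChar R (Q (e i)) * signChar R (s ⬝ᵥ e i)) *
    (signChar_mul_self R (Q t) + signChar R (Q t) ^ 2 * signChar_mul_self R (b ⬝ᵥ e i))

variable (R) in
/-- The (unnormalised) Hadamard matrix, the character table of `𝔽₂ⁿ`. -/
def hadamardMatrix : Matrix m m R :=
  of fun i j ↦ signChar R (e i ⬝ᵥ e j)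

theorem hadamardMatrix_mul_pauli (s t : ι → ZMod 2) :
    hadamardMatrix R e * pauli R e (s, t) =
      signChar R (s ⬝ᵥ t) • (pauli R e (t, s) * hadamardMatrix R e) := by
  ext i j
  rw [mul_pauli_apply, Matrix.smul_apply, pauli_mul_apply]
  simp only [hadamardMatrix, of_apply, e.apply_symm_apply, dotProduct_add, add_dotProduct,
    AddChar.map_add_eq_mul, smul_eq_mul, dotProduct_comm t]
  ring

variable [DecidableEq m]

theorem hadamardMatrix_mem_orthogonalGroup [IsDomain R] [NeZero (2 : R)]
    (hcard : (2 : R) ^ Fintype.card ι = 1) : hadamardMatrix R e ∈ orthogonalGroup m R := by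
  classical
  refine (mem_orthogonalGroup_iff m R).2 (Matrix.ext fun i j ↦ ?_)
  calc (hadamardMatrix R e * (hadamardMatrix R e)ᵀ) i j
    _ = ∑ k, signChar R (e k ⬝ᵥ (e i + e j)) := by
      simp [mul_apply, hadamardMatrix, AddChar.map_add_eq_mul, dotProduct_comm]
    _ = ∑ u, signChar R (u ⬝ᵥ (e i + e j)) :=
      e.sum_comp fun u ↦ signChar R (u ⬝ᵥ (e i + e j))
    _ = (1 : Matrix m m R) i j := by
      rw [sum_signChar_dotProduct, hcard, ← ZModModule.sub_eq_add (e i) (e j), one_apply]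
      exact if_congr (sub_eq_zero.trans e.apply_eq_iff_eq) rfl rfl

theorem permMatrix_mem_orthogonalGroup (σ : Equiv.Perm m) :
    σ.permMatrix R ∈ orthogonalGroup m R := by
  rw [mem_orthogonalGroup_iff, transpose_permMatrix, ← permMatrix_mul, inv_mul_cancel,
    permMatrix_one]

theorem permMatrix_mul_pauli (A : (ι → ZMod 2) ≃+ (ι → ZMod 2)) (t : ι → ZMod 2) :
    (e.symm.permCongr A.toEquiv).permMatrix R * pauli R e (0, A t) =
      pauli R e (0, t) * (e.symm.permCongr A.toEquiv).permMatrix R := by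
  rw [Equiv.Perm.permMatrix, PEquiv.toMatrix_toPEquiv_mul, PEquiv.mul_toMatrix_toPEquiv]
  ext i j
  simp [pauli_apply, ← map_add, Equiv.permCongr_def, ← A.symm_apply_eq]

end CliffordElements

section Minimality

variable {ι m R : Type*} [Fintype ι] [Fintype m] [DecidableEq m] [CommRing R]
  (e : m ≃ (ι → ZMod 2)) {K : Subgroup (PGO m R)}

theorem pauliHom_add_mem {v w : (ι → ZMod 2) × (ι → ZMod 2)} (hv : pauliHom R e (.ofAdd v) ∈ K)
    (hw : pauliHom R e (.ofAdd w) ∈ K) : pauliHom R e (.ofAdd (v + w)) ∈ K := by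
  rw [ofAdd_add, map_mul]
  exact K.mul_mem hv hw

variable [K.Normal]

theorem pauliHom_mem_of_mul_pauli_eq_smul {g : Matrix m m R} (hg : g ∈ orthogonalGroup m R) {c : R}
    {v w : (ι → ZMod 2) × (ι → ZMod 2)} (h : g * pauli R e v = c • (pauli R e w * g))
    (hv : pauliHom R e (.ofAdd v) ∈ K) : pauliHom R e (.ofAdd w) ∈ K :=
  mk_mul_pauliHom_mul_inv e ⟨g, hg⟩ h ▸ ‹K.Normal›.conj_mem _ hv _

theorem exists_pauliHom_fst_mem [Nontrivial ι] {t : ι → ZMod 2} (ht : t ≠ 0) (s : ι → ZMod 2)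
    (h : pauliHom R e (.ofAdd (s, t)) ∈ K) :
    ∃ b : ι → ZMod 2, b ≠ 0 ∧ pauliHom R e (.ofAdd (b, 0)) ∈ K := by
  obtain ⟨Q, b, hb, hQ⟩ := exists_polarization_ne_zero ht
  have hshift : pauliHom R e (.ofAdd (s + b, t)) ∈ K :=
    pauliHom_mem_of_mul_pauli_eq_smul e (diagonal_signChar_mem_orthogonalGroup _)
      (diagonal_signChar_mul_pauli e Q hQ s) h
  refine ⟨b, hb, ?_⟩
  simpa [← add_assoc, ZModModule.add_self] using pauliHom_add_mem e h hshift

theorem pauliHom_snd_mem {t : ι → ZMod 2} (ht : t ≠ 0) (h : pauliHom R e (.ofAdd (0, t)) ∈ K)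
    (t' : ι → ZMod 2) : pauliHom R e (.ofAdd (0, t')) ∈ K := by
  obtain rfl | ht' := eq_or_ne t' 0
  · exact (map_one (pauliHom R e)).symm ▸ K.one_mem
  obtain ⟨A, rfl⟩ := exists_linearEquiv_apply_eq (K := ZMod 2) ht' ht
  exact pauliHom_mem_of_mul_pauli_eq_smul e (permMatrix_mem_orthogonalGroup _)
    ((permMatrix_mul_pauli e A.toAddEquiv t').trans (one_smul R _).symm) h

variable [IsDomain R] [NeZero (2 : R)] (hcard : (2 : R) ^ Fintype.card ι = 1)

include hcard in
theorem pauliHom_swap_mem {s t : ι → ZMod 2} (h : pauliHom R e (.ofAdd (s, t)) ∈ K) :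
    pauliHom R e (.ofAdd (t, s)) ∈ K :=
  pauliHom_mem_of_mul_pauli_eq_smul e (hadamardMatrix_mem_orthogonalGroup e hcard)
    (hadamardMatrix_mul_pauli e s t) h

include hcard in
theorem range_pauliHom_le_of_mem [Nontrivial ι] {v : (ι → ZMod 2) × (ι → ZMod 2)} (hv : v ≠ 0)
    (h : pauliHom R e (.ofAdd v) ∈ K) : (pauliHom R e).range ≤ K := by
  obtain ⟨b, hb, hbK⟩ : ∃ b : ι → ZMod 2, b ≠ 0 ∧ pauliHom R e (.ofAdd (b, 0)) ∈ K := by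
    obtain ⟨s, t⟩ := v
    obtain rfl | ht := eq_or_ne t 0
    · exact ⟨s, fun hs ↦ hv (Prod.ext hs rfl), h⟩
    · exact exists_pauliHom_fst_mem e ht s h
  have hsnd := pauliHom_snd_mem e hb (pauliHom_swap_mem e hcard hbK)
  rintro _ ⟨w, rfl⟩
  simpa using pauliHom_add_mem e (pauliHom_swap_mem e hcard (hsnd w.toAdd.1)) (hsnd w.toAdd.2)

end Minimality

section Normality

/-- The labelling of four coordinates by `𝔽₂²`, through binary digits. -/
def binaryLabel : Fin 4 ≃ (Fin 2 → ZMod 2) :=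
  (finFunctionFinEquiv : (Fin 2 → Fin 2) ≃ Fin (2 ^ 2)).symm

theorem eq_of_transpose_eq_neg {R : Type*} [CommRing R] [IsDomain R] [NeZero (2 : R)]
    {A : Matrix (Fin 4) (Fin 4) R} (hA : Aᵀ = -A) :
    A = !![0, A 0 1, A 0 2, A 0 3; -A 0 1, 0, A 1 2, A 1 3;
      -A 0 2, -A 1 2, 0, A 2 3; -A 0 3, -A 1 3, -A 2 3, 0] := by
  have hskew (i j : Fin 4) : A j i = -A i j := congr_fun₂ hA i j
  have hdiag (i : Fin 4) : A i i = 0 :=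
    (mul_eq_zero.1 ((two_mul _).trans (eq_neg_iff_add_eq_zero.1 (hskew i i)))).resolve_left
      two_ne_zero
  ext i j
  fin_cases i <;> fin_cases j <;> first | exact hdiag _ | exact hskew _ _ | rfl

-- In each row the squares of three off-diagonal entries add up to `1` in `𝔽₃`, so exactly one of
-- them is nonzero. By skew-symmetry the positions of the nonzero entries form a fixed-point-free
-- involution, which is a translation of `𝔽₂²`.
theorem exists_eq_smul_pauli_of_row_sq_sum_eq_one : ∀ a b c d f g : ZMod 3,
    a ^ 2 + b ^ 2 + c ^ 2 = 1 → a ^ 2 + d ^ 2 + f ^ 2 = 1 → b ^ 2 + d ^ 2 + g ^ 2 = 1 →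
    c ^ 2 + f ^ 2 + g ^ 2 = 1 →
    ∃ (k : ZMod 3) (v : _),
      !![0, a, b, c; -a, 0, d, f; -b, -d, 0, g; -c, -f, -g, 0] =
        k • pauli (ZMod 3) binaryLabel v := by
  decide +kernel

instance : NeZero (2 : ZMod 3) := ⟨by decide⟩

theorem exists_eq_smul_pauli_of_transpose_eq_neg {A : Matrix (Fin 4) (Fin 4) (ZMod 3)}
    (hskew : Aᵀ = -A) (horth : A ∈ orthogonalGroup (Fin 4) (ZMod 3)) :
    ∃ (k : ZMod 3) (v : _), A = k • pauli (ZMod 3) binaryLabel v := by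
  have hrow (i : Fin 4) : ∑ j, A i j ^ 2 = 1 := by
    simpa [mul_apply, sq] using congr_fun₂ ((mem_orthogonalGroup_iff _ _).1 horth) i i
  rw [eq_of_transpose_eq_neg hskew] at hrow ⊢
  apply exists_eq_smul_pauli_of_row_sq_sum_eq_one
  · simpa [Fin.sum_univ_four] using hrow 0
  · simpa [Fin.sum_univ_four] using hrow 1
  · simpa [Fin.sum_univ_four] using hrow 2
  · simpa [Fin.sum_univ_four] using hrow 3

theorem conj_pauliHom_mem_range (g : orthogonalGroup (Fin 4) (ZMod 3))
    {v : (Fin 2 → ZMod 2) × (Fin 2 → ZMod 2)} (hv : v.1 ⬝ᵥ v.2 = 1) :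
    (g : PGO (Fin 4) (ZMod 3)) * pauliHom (ZMod 3) binaryLabel (.ofAdd v) *
      (g : PGO (Fin 4) (ZMod 3))⁻¹ ∈ (pauliHom (ZMod 3) binaryLabel).range := by
  have hskew : (g.1 * pauli (ZMod 3) binaryLabel v * g.1ᵀ)ᵀ =
      -(g.1 * pauli (ZMod 3) binaryLabel v * g.1ᵀ) := by
    rw [transpose_mul, transpose_mul, transpose_transpose, pauli_transpose, hv, signChar_one,
      neg_one_smul, neg_mul, mul_neg, mul_assoc]
  obtain ⟨k, w, hw⟩ := exists_eq_smul_pauli_of_transpose_eq_neg hskew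
    (g * pauliOrthogonal (ZMod 3) binaryLabel v * g⁻¹).2
  exact ⟨.ofAdd w, (PGO.mk_eq_mk_of_eq_smul
    (g := g * pauliOrthogonal (ZMod 3) binaryLabel v * g⁻¹)
    (h := pauliOrthogonal (ZMod 3) binaryLabel w) hw).symm⟩

theorem exists_add_of_dotProduct_eq_one : ∀ v : (Fin 2 → ZMod 2) × (Fin 2 → ZMod 2),
    ∃ w w' : (Fin 2 → ZMod 2) × (Fin 2 → ZMod 2),
      w.1 ⬝ᵥ w.2 = 1 ∧ w'.1 ⬝ᵥ w'.2 = 1 ∧ v = w + w' := by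
  decide +kernel

theorem normal_range_pauliHom : (pauliHom (ZMod 3) binaryLabel).range.Normal where
  conj_mem := by
    rintro _ ⟨v, rfl⟩ x
    obtain ⟨g, rfl⟩ := QuotientGroup.mk_surjective x
    obtain ⟨w, w', hw, hw', hv⟩ := exists_add_of_dotProduct_eq_one v.toAdd
    rw [← ofAdd_toAdd v, hv, ofAdd_add, map_mul, ← conj_mul]
    exact mul_mem (conj_pauliHom_mem_range g hw) (conj_pauliHom_mem_range g hw')

end Normality

/-- The socle of `PGO₄⁺(3)`: there is a normal subgroup `N ≅ (ℤ/2ℤ)⁴` of `PGO₄⁺(3)`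
contained in every nontrivial normal subgroup. -/
theorem PGO4_plus_3_socle :
    ∃ N : Subgroup ((Matrix.orthogonalGroup (Fin 4) (ZMod 3)) ⧸
        Subgroup.center (Matrix.orthogonalGroup (Fin 4) (ZMod 3))),
      N.Normal ∧
      Nonempty (N ≃* (Fin 4 → Multiplicative (ZMod 2))) ∧
      ∀ K : Subgroup ((Matrix.orthogonalGroup (Fin 4) (ZMod 3)) ⧸
          Subgroup.center (Matrix.orthogonalGroup (Fin 4) (ZMod 3))),
        K.Normal → K ≠ ⊥ → N ≤ K := by
  have hnormal := normal_range_pauliHom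
  have hcard : (2 : ZMod 3) ^ Fintype.card (Fin 2) = 1 := by decide
  refine ⟨(pauliHom (ZMod 3) binaryLabel).range, hnormal, ?_, fun K hK hne ↦
    le_of_minimal_normal_of_centralizer_le (centralizer_range_pauliHom_le binaryLabel) ?_ hne⟩
  · obtain ⟨e⟩ : Nonempty (((Fin 2 → ZMod 2) × (Fin 2 → ZMod 2)) ≃ₗ[ZMod 2] (Fin 4 → ZMod 2)) :=
      FiniteDimensional.nonempty_linearEquiv_of_finrank_eq (by simp)
    exact ⟨(MonoidHom.ofInjective (pauliHom_injective binaryLabel)).symm.trans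
      (e.toAddEquiv.toMultiplicative.trans (MulEquiv.piMultiplicative _))⟩
  · intro M hM hMN hMne
    obtain ⟨x, hxM, hx⟩ := M.bot_or_exists_ne_one.resolve_left hMne
    obtain ⟨v, rfl⟩ := hMN hxM
    exact range_pauliHom_le_of_mem binaryLabel hcard
      (fun hv ↦ hx ((congr_arg _ hv).trans (map_one _))) hxM
end

section
/- Every smooth plane cubic over ℂ is projectively equivalent to a cubic in Hesse form: if g is a homogeneous cubic polynomial in three variables over ℂ whose partial derivatives have no common nonzero zero, then there exist an invertible matrix A ∈ GL₃(ℂ), a nonzero scalar c ∈ ℂˣ, and k ∈ ℂ with k³ ≠ 1, such that substituting the linear change of variables given by A into g yields c·(x³ + y³ + z³ − 3k·xyz). -/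
open MvPolynomial

/-- The Hesse cubic form `x³ + y³ + z³ − 3k·xyz`. -/
noncomputable def hesseCubic (k : ℂ) : MvPolynomial (Fin 3) ℂ :=
  X 0 ^ 3 + X 1 ^ 3 + X 2 ^ 3 - C (3 * k) * (X 0 * X 1 * X 2)

/-!
By Krull's height theorem, a cubic and its Hessian have a common zero, which for a smooth cubic is
a flex. In coordinates adapted to this flex the cubic becomes a Weierstrass cubic
`y² = x³ + a₄ x + a₆`. The roots of its `3`-division polynomial are the abscissas of the other
flexes. Taking the tangents at the flexes `(x, ±y)` over a nonzero such root and at the flex at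
infinity as coordinate axes, the three collinear flexes put the equation in the form
`(x + y + z)³ + d x y z`. The Hesse form is the image of this under the discrete Fourier transform
of order `3`, since the product of `s x + y + z`, `s x + ω y + ω² z` and `s x + ω² y + ω z` is
`s³ x³ + y³ + z³ - 3 s x y z`, while their sum is `3 s x`.
-/

section CommonZero

variable {K ι : Type*} [Field K] [IsAlgClosed K] [Fintype ι]

-- The maximal ideals are the ideals of points, and translations permute these transitively, so
-- they all have the same height.
theorem card_le_height_vanishingIdeal_singleton (x : ι → K) :
    (Fintype.card ι : ℕ∞) ≤ (vanishingIdeal K {x}).height := by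
  have hdim : ringKrullDim (MvPolynomial ι K) = Fintype.card ι := by
    rw [ringKrullDim_of_isNoetherianRing, ringKrullDim_eq_zero_of_field, zero_add,
      Nat.card_eq_fintype_card]
  suffices h : ringKrullDim (MvPolynomial ι K) ≤ (vanishingIdeal K {x}).height by
    rw [hdim] at h
    exact_mod_cast h
  refine (ringKrullDim_le_iff_isMaximal_height_le _).mpr fun m hm ↦ ?_
  obtain ⟨y, rfl⟩ := isMaximal_iff_eq_vanishingIdeal_singleton.mp hm
  let translation : MvPolynomial ι K ≃ₐ[K] MvPolynomial ι K := AlgEquiv.ofAlgHom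
    (aeval fun i ↦ X i + C (x i - y i)) (aeval fun i ↦ X i + C (y i - x i))
    (algHom_ext fun i ↦ by simp [add_assoc]) (algHom_ext fun i ↦ by simp [add_assoc])
  have eval_translation (f : MvPolynomial ι K) : eval y (translation f) = eval x f := by
    change eval y (aeval _ f) = _
    rw [aeval_def, algebraMap_eq, ← eval_assoc]
    congr 2
    ext i
    simp
  have comap_eq : (vanishingIdeal K {y}).comap translation = vanishingIdeal K {x} := by
    ext f
    simp only [Ideal.mem_comap, mem_vanishingIdeal_singleton_iff, aeval_eq_eval,
      eval_translation]
  rw [← comap_eq]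
  exact_mod_cast (translation.toRingEquiv.height_comap _).ge

theorem card_le_card_of_zeroLocus_span_eq_singleton {s : Finset (MvPolynomial ι K)} {x : ι → K}
    (hs : zeroLocus K (Ideal.span (s : Set (MvPolynomial ι K))) = {x}) :
    Fintype.card ι ≤ s.card := by
  have hprime : (vanishingIdeal K {x} : Ideal (MvPolynomial ι K)).IsPrime :=
    (isMaximal_iff_eq_vanishingIdeal_singleton.mpr ⟨x, rfl⟩).isPrime
  have hmin : vanishingIdeal K {x} ∈ (Ideal.span (s : Set (MvPolynomial ι K))).minimalPrimes := by
    rw [← Ideal.radical_minimalPrimes, ← vanishingIdeal_zeroLocus_eq_radical (K := K), hs,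
      Ideal.minimalPrimes_eq_subsingleton_self]
    rfl
  exact_mod_cast (card_le_height_vanishingIdeal_singleton x).trans
    (Ideal.height_le_card_of_mem_minimalPrimes_span_finset hmin)

theorem exists_ne_forall_eval_eq_zero {s : Finset (MvPolynomial ι K)}
    (hs : s.card < Fintype.card ι) {x : ι → K} (hx : ∀ f ∈ s, eval x f = 0) :
    ∃ p ≠ x, ∀ f ∈ s, eval p f = 0 := by
  by_contra! hne
  refine hs.not_ge (card_le_card_of_zeroLocus_span_eq_singleton (x := x) ?_)
  ext p
  simp only [zeroLocus_span, Set.mem_ofPred_eq, SetLike.mem_coe, aeval_eq_eval,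
    Set.mem_singleton_iff]
  refine ⟨fun hp ↦ ?_, fun hp ↦ hp ▸ hx⟩
  by_contra hpx
  obtain ⟨f, hf, hpf⟩ := hne p hpx
  exact hpf (hp f hf)

end CommonZero

section DirDeriv

variable {R ι : Type*} [CommRing R] [Fintype ι]

/-- The derivative `∑ i, v i • ∂ᵢ` of polynomials in the constant direction `v`, as a linear
function of `v`. -/
noncomputable def dirDeriv : (ι → R) →ₗ[R] Derivation R (MvPolynomial ι R) (MvPolynomial ι R) :=
  Fintype.linearCombination R pderiv

theorem dirDeriv_apply (v : ι → R) (f : MvPolynomial ι R) :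
    dirDeriv v f = ∑ i, v i • pderiv i f := by
  rw [dirDeriv, Fintype.linearCombination_apply, ← Derivation.coeFnAddMonoidHom_apply, map_sum]
  simp

@[simp]
theorem dirDeriv_single [DecidableEq ι] (i : ι) :
    dirDeriv (Pi.single i (1 : R)) = pderiv i := by
  rw [dirDeriv, Fintype.linearCombination_apply_single, one_smul]

@[simp]
theorem dirDeriv_X (v : ι → R) (i : ι) : dirDeriv v (X i) = C (v i) := by
  classical
  simp [dirDeriv_apply, pderiv_X, Pi.single_apply, smul_eq_C_mul]

theorem dirDeriv_comm (u v : ι → R) (f : MvPolynomial ι R) :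
    dirDeriv u (dirDeriv v f) = dirDeriv v (dirDeriv u f) := by
  have hbracket : ⁅(dirDeriv u : Derivation R (MvPolynomial ι R) _), dirDeriv v⁆ = 0 :=
    derivation_ext fun i ↦ by simp [Derivation.commutator_apply]
  simpa [Derivation.commutator_apply, sub_eq_zero] using DFunLike.congr_fun hbracket f

theorem isHomogeneous_dirDeriv {f : MvPolynomial ι R} {n : ℕ} (hf : f.IsHomogeneous n)
    (v : ι → R) : (dirDeriv v f).IsHomogeneous (n - 1) := by
  rw [dirDeriv_apply]
  refine IsHomogeneous.sum _ _ _ fun i _ ↦ ?_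
  rw [smul_eq_C_mul]
  exact hf.pderiv.C_mul _

theorem eval_dirDeriv_self {f : MvPolynomial ι R} {n : ℕ} (hf : f.IsHomogeneous n) (v : ι → R) :
    eval v (dirDeriv v f) = n * eval v f := by
  simpa [dirDeriv_apply, smul_eval] using congrArg (eval v) hf.sum_X_mul_pderiv

end DirDeriv

section LinearSubst

variable {R ι : Type*} [CommRing R] [Fintype ι]

/-- The linear change of variables `f(x) ↦ f(Ax)`. -/
noncomputable def linearSubst (A : Matrix ι ι R) : MvPolynomial ι R →ₐ[R] MvPolynomial ι R :=
  bind₁ A.toMvPolynomial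

theorem linearSubst_eq_aeval (A : Matrix ι ι R) :
    linearSubst A = aeval fun i ↦ ∑ j, A i j • X j := by
  refine algHom_ext fun i ↦ ?_
  simp [linearSubst, Matrix.toMvPolynomial, smul_eq_C_mul, C_mul_X_eq_monomial]

theorem linearSubst_mul (A B : Matrix ι ι R) (f : MvPolynomial ι R) :
    linearSubst (A * B) f = linearSubst B (linearSubst A f) := by
  simp only [linearSubst, bind₁_bind₁, ← Matrix.toMvPolynomial_mul]

@[simp]
theorem eval_linearSubst (A : Matrix ι ι R) (f : MvPolynomial ι R) (v : ι → R) :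
    eval v (linearSubst A f) = eval (A.mulVec v) f := by
  rw [linearSubst, eval, eval₂Hom_bind₁]
  congr 2
  ext i
  exact A.toMvPolynomial_eval_eq_apply i v

theorem dirDeriv_linearSubst (A : Matrix ι ι R) (v : ι → R) (f : MvPolynomial ι R) :
    dirDeriv v (linearSubst A f) = linearSubst A (dirDeriv (A.mulVec v) f) := by
  induction f using MvPolynomial.induction_on with
  | C a => simp [linearSubst]
  | add f g hf hg => simp only [map_add, hf, hg]
  | mul_X f i hf =>
    have hX : dirDeriv v (linearSubst A (X i)) = C (A.mulVec v i) := by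
      simp [linearSubst_eq_aeval, smul_eq_C_mul, Matrix.mulVec, dotProduct]
    have hC (a : R) : linearSubst A (C a) = C a := algHom_C _ a
    simp only [map_mul, map_add, Derivation.leibniz, smul_eq_mul, hf, hX, dirDeriv_X, hC]

end LinearSubst

section Nonsingular

variable {K ι : Type*} [Field K] [Fintype ι]

/-- For a form `f`, this says that the projective hypersurface `f = 0` is smooth, provided that
the degree of `f` is nonzero in `K`: by Euler's identity, a common zero of the partial derivatives
is then a zero of `f` as well. -/
def IsNonsingular (f : MvPolynomial ι K) : Prop :=
  ∀ p : ι → K, (∀ i, eval p (pderiv i f) = 0) → p = 0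

theorem forall_eval_dirDeriv_eq_zero_iff {f : MvPolynomial ι K} {p : ι → K} :
    (∀ v, eval p (dirDeriv v f) = 0) ↔ ∀ i, eval p (pderiv i f) = 0 := by
  classical
  refine ⟨fun h i ↦ by simpa using h (Pi.single i 1), fun h v ↦ ?_⟩
  simp [dirDeriv_apply, smul_eval, h]

variable [DecidableEq ι]

/-- Projective equivalence of the hypersurfaces `f = 0` and `g = 0`, expressed by their
equations. -/
def IsProjEquiv (f g : MvPolynomial ι K) : Prop :=
  ∃ (A : GL ι K) (c : Kˣ), linearSubst (A : Matrix ι ι K) f = (c : K) • g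

theorem IsProjEquiv.trans {f g h : MvPolynomial ι K} (hfg : IsProjEquiv f g)
    (hgh : IsProjEquiv g h) : IsProjEquiv f h := by
  obtain ⟨A, c, hA⟩ := hfg
  obtain ⟨B, d, hB⟩ := hgh
  refine ⟨A * B, c * d, ?_⟩
  rw [Units.val_mul, linearSubst_mul, hA, map_smul, hB, smul_smul, Units.val_mul]

theorem isProjEquiv_of_eval_mulVec [Infinite K] {f g : MvPolynomial ι K} {A : Matrix ι ι K}
    (hA : A.det ≠ 0) {c : K} (hc : c ≠ 0)
    (h : ∀ v, eval (A.mulVec v) f = c * eval v g) : IsProjEquiv f g := by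
  refine ⟨.mkOfDetNeZero A hA, .mk0 c hc, MvPolynomial.funext fun v ↦ ?_⟩
  rw [eval_linearSubst, smul_eval]
  exact h v

theorem IsNonsingular.of_isProjEquiv {f g : MvPolynomial ι K} (hf : IsNonsingular f)
    (hfg : IsProjEquiv f g) : IsNonsingular g := by
  obtain ⟨A, c, hA⟩ := hfg
  intro p hp
  rw [← forall_eval_dirDeriv_eq_zero_iff] at hp
  have hAp : (A : Matrix ι ι K).mulVec p = 0 := by
    refine hf _ (forall_eval_dirDeriv_eq_zero_iff.mp fun w ↦ ?_)
    obtain ⟨v, rfl⟩ := Matrix.mulVec_surjective_iff_isUnit.mpr A.isUnit w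
    rw [← eval_linearSubst, ← dirDeriv_linearSubst, hA, Derivation.map_smul, smul_eval,
      hp, mul_zero]
  exact Matrix.mulVec_injective_of_isUnit A.isUnit (by rw [hAp, Matrix.mulVec_zero])

end Nonsingular

theorem eval_zero_of_isHomogeneous {R ι : Type*} [CommSemiring R] {f : MvPolynomial ι R} {n : ℕ}
    (hf : f.IsHomogeneous n) (hn : n ≠ 0) : eval 0 f = 0 := by
  rw [eval_zero, constantCoeff_eq]
  exact hf.coeff_eq_zero (by simpa using hn.symm)

section Hessian

/-- The matrix of second partial derivatives of a polynomial. -/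
noncomputable def hessian {R ι : Type*} [CommSemiring R] (f : MvPolynomial ι R) :
    Matrix ι ι (MvPolynomial ι R) :=
  Matrix.of fun i j ↦ pderiv i (pderiv j f)

theorem hessian_map_eval_mulVec {R ι : Type*} [CommRing R] [Fintype ι] (f : MvPolynomial ι R)
    (p u : ι → R) (i : ι) :
    ((hessian f).map (eval p)).mulVec u i = eval p (pderiv i (dirDeriv u f)) := by
  simp [hessian, Matrix.mulVec, dotProduct, dirDeriv_apply, smul_eval, mul_comm]

variable {K ι : Type*} [Field K] [Fintype ι]

theorem exists_dirDeriv_eq_zero_of_eval_det_hessian [DecidableEq ι] {f : MvPolynomial ι K}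
    {p : ι → K} (hp : eval p (hessian f).det = 0) :
    ∃ u ≠ 0, ∀ v, eval p (dirDeriv v (dirDeriv u f)) = 0 := by
  rw [RingHom.map_det] at hp
  obtain ⟨u, hu, hker⟩ := Matrix.exists_mulVec_eq_zero_iff.mpr hp
  refine ⟨u, hu, forall_eval_dirDeriv_eq_zero_iff.mpr fun i ↦ ?_⟩
  rw [← hessian_map_eval_mulVec]
  exact congrFun hker i

theorem exists_common_zero_det_hessian [IsAlgClosed K] [DecidableEq ι] {f : MvPolynomial ι K}
    {n : ℕ} (hf : f.IsHomogeneous n) (hn : 2 < n) (hι : 2 < Fintype.card ι) :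
    ∃ p ≠ 0, eval p f = 0 ∧ eval p (hessian f).det = 0 := by
  classical
  have hdet : eval 0 (hessian f).det = 0 := by
    have : Nonempty ι := Fintype.card_pos_iff.mp (by lia)
    have hzero : (eval 0).mapMatrix (hessian f) = 0 := by
      ext i j
      exact eval_zero_of_isHomogeneous hf.pderiv.pderiv (by lia)
    rw [RingHom.map_det, hzero, Matrix.det_zero]
  obtain ⟨p, hp, hzeros⟩ := exists_ne_forall_eval_eq_zero (s := {f, (hessian f).det}) (x := 0)
    (Finset.card_le_two.trans_lt hι) (by
      simp only [Finset.mem_insert, Finset.mem_singleton, forall_eq_or_imp, forall_eq]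
      exact ⟨eval_zero_of_isHomogeneous hf (by lia), hdet⟩)
  exact ⟨p, hp, hzeros _ (by simp), hzeros _ (by simp)⟩

end Hessian

section PolarForm

variable {R ι : Type*} [CommRing R] [Fintype ι]

/-- The symmetric trilinear form `T` of a cubic form `g`, normalised such that
`T(v, v, v) = 6 g(v)`. The third derivatives of `g` are constants, so it does not matter where
they are evaluated. -/
noncomputable def polarForm (g : MvPolynomial ι R) :
    (ι → R) →ₗ[R] (ι → R) →ₗ[R] (ι → R) →ₗ[R] R where
  toFun u := LinearMap.mk₂ R (fun v w ↦ eval 0 (dirDeriv u (dirDeriv v (dirDeriv w g))))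
    (fun _ _ _ ↦ by simp) (fun _ _ _ ↦ by simp)
    (fun _ _ _ ↦ by simp) (fun _ _ _ ↦ by simp)
  map_add' _ _ := by ext; simp
  map_smul' _ _ := by ext; simp

theorem polarForm_apply (g : MvPolynomial ι R) (u v w : ι → R) :
    polarForm g u v w = eval 0 (dirDeriv u (dirDeriv v (dirDeriv w g))) :=
  rfl

theorem polarForm_comm_left (g : MvPolynomial ι R) (u v w : ι → R) :
    polarForm g u v w = polarForm g v u w := by
  rw [polarForm_apply, dirDeriv_comm, polarForm_apply]

theorem polarForm_comm_right (g : MvPolynomial ι R) (u v w : ι → R) :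
    polarForm g u v w = polarForm g u w v := by
  rw [polarForm_apply, dirDeriv_comm v w, polarForm_apply]

theorem polarForm_linearCombination_self (g : MvPolynomial ι R) (a b c : ι → R) (x y z : R) :
    polarForm g (x • a + y • b + z • c) (x • a + y • b + z • c) (x • a + y • b + z • c) =
      x ^ 3 * polarForm g a a a + y ^ 3 * polarForm g b b b + z ^ 3 * polarForm g c c c
      + 3 * x ^ 2 * y * polarForm g a a b + 3 * x ^ 2 * z * polarForm g a a c
      + 3 * y ^ 2 * x * polarForm g b b a + 3 * y ^ 2 * z * polarForm g b b c
      + 3 * z ^ 2 * x * polarForm g c c a + 3 * z ^ 2 * y * polarForm g c c b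
      + 6 * x * y * z * polarForm g a b c := by
  simp only [map_add, map_smul, LinearMap.add_apply, LinearMap.smul_apply, smul_eq_mul]
  simp only [polarForm_comm_left, polarForm_comm_right]
  ring

variable {g : MvPolynomial ι R}

theorem eval_dirDeriv_dirDeriv_eq_polarForm (hg : g.IsHomogeneous 3) (u v w : ι → R) :
    eval u (dirDeriv v (dirDeriv w g)) = polarForm g u v w := by
  have hlin : (dirDeriv v (dirDeriv w g)).IsHomogeneous 1 :=
    isHomogeneous_dirDeriv (isHomogeneous_dirDeriv hg w) v
  have hconst : (dirDeriv u (dirDeriv v (dirDeriv w g))).totalDegree = 0 :=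
    (totalDegree_zero_iff_isHomogeneous _).mpr (isHomogeneous_dirDeriv hlin u)
  have heuler := eval_dirDeriv_self hlin u
  rw [totalDegree_eq_zero_iff_eq_C.mp hconst] at heuler
  rw [polarForm_apply, totalDegree_eq_zero_iff_eq_C.mp hconst]
  simpa using heuler.symm

theorem two_mul_eval_dirDeriv_eq_polarForm (hg : g.IsHomogeneous 3) (v w : ι → R) :
    2 * eval v (dirDeriv w g) = polarForm g v v w := by
  rw [← eval_dirDeriv_dirDeriv_eq_polarForm hg]
  exact_mod_cast (eval_dirDeriv_self (isHomogeneous_dirDeriv hg w) v).symm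

theorem six_mul_eval_eq_polarForm (hg : g.IsHomogeneous 3) (v : ι → R) :
    6 * eval v g = polarForm g v v v := by
  rw [← two_mul_eval_dirDeriv_eq_polarForm hg, eval_dirDeriv_self hg]
  push_cast
  ring

end PolarForm

section FlexFrame

variable {K ι : Type*} [Field K] [Fintype ι] {g : MvPolynomial ι K}

theorem IsNonsingular.eq_zero_of_polarForm_self_self [NeZero (2 : K)] (hsm : IsNonsingular g)
    (hg : g.IsHomogeneous 3) {q : ι → K} (hq : ∀ v, polarForm g q q v = 0) : q = 0 := by
  refine hsm q (forall_eval_dirDeriv_eq_zero_iff.mp fun v ↦ ?_)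
  have htwo : 2 * eval q (dirDeriv v g) = 0 := by
    rw [two_mul_eval_dirDeriv_eq_polarForm hg, hq]
  exact (mul_eq_zero.mp htwo).resolve_left two_ne_zero

/-- A frame adapted to a flex `p` of the cubic `g = 0`: the points `p` and `u` span the flex
tangent, and `w` is a point off this line, scaled in a way which produces the coefficient `-1` at
`y²z` in the coordinates `x • u + y • p + z • w`. -/
structure IsFlexFrame (g : MvPolynomial ι K) (u p w : ι → K) : Prop where
  ne_zero : u ≠ 0
  polarForm_flex : polarForm g p p p = 0
  polarForm_tangent : ∀ v, polarForm g p u v = 0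
  polarForm_transversal : polarForm g p p w = -2

theorem exists_isFlexFrame [IsAlgClosed K] [NeZero (2 : K)] (hg : g.IsHomogeneous 3)
    (hsm : IsNonsingular g) (hι : 2 < Fintype.card ι) : ∃ u p w, IsFlexFrame g u p w := by
  classical
  obtain ⟨p, hp, hgp, hdet⟩ := exists_common_zero_det_hessian hg (by lia) hι
  obtain ⟨u, hu, hpu⟩ := exists_dirDeriv_eq_zero_of_eval_det_hessian hdet
  obtain ⟨w, hw⟩ : ∃ w, polarForm g p p w ≠ 0 := by
    contrapose! hp
    exact hsm.eq_zero_of_polarForm_self_self hg hp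
  refine ⟨u, p, (-2 / polarForm g p p w) • w, hu, ?_, fun v ↦ ?_, ?_⟩
  · rw [← six_mul_eval_eq_polarForm hg, hgp, mul_zero]
  · rw [polarForm_comm_right, ← eval_dirDeriv_dirDeriv_eq_polarForm hg, hpu]
  · rw [map_smul, smul_eq_mul, div_mul_cancel₀ _ hw]

namespace IsFlexFrame

variable {u p w : ι → K}

theorem polarForm_flex_flex_tangent (h : IsFlexFrame g u p w) : polarForm g p p u = 0 := by
  rw [polarForm_comm_right, h.polarForm_tangent]

theorem polarForm_tangent_tangent_flex (h : IsFlexFrame g u p w) : polarForm g u u p = 0 := by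
  rw [polarForm_comm_right, polarForm_comm_left, h.polarForm_tangent]

theorem linearIndependent [NeZero (2 : K)] (h : IsFlexFrame g u p w) :
    LinearIndependent K ![u, p, w] := by
  refine Fintype.linearIndependent_iff.mpr fun t ht ↦ ?_
  simp only [Fin.sum_univ_three, Matrix.cons_val_zero, Matrix.cons_val_one,
    Matrix.cons_val] at ht
  have htwo : (2 : K) ≠ 0 := two_ne_zero
  have hpair (v : ι → K) : t 1 * polarForm g p p v + t 2 * polarForm g p w v = 0 := by
    simpa [h.polarForm_tangent] using congrArg (polarForm g p · v) ht
  have hw : t 2 = 0 := by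
    simpa [h.polarForm_flex, polarForm_comm_right g p w, h.polarForm_transversal, htwo]
      using hpair p
  have hp : t 1 = 0 := by
    simpa [hw, h.polarForm_transversal, htwo] using hpair w
  have hu : t 0 = 0 := by
    simpa [hw, hp, h.ne_zero] using ht
  intro i
  fin_cases i <;> assumption

theorem smul_left (h : IsFlexFrame g u p w) {r : K} (hr : r ≠ 0) :
    IsFlexFrame g (r • u) p w where
  ne_zero := smul_ne_zero hr h.ne_zero
  polarForm_flex := h.polarForm_flex
  polarForm_tangent v := by simp [h.polarForm_tangent]
  polarForm_transversal := h.polarForm_transversal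

theorem add_right (h : IsFlexFrame g u p w) (α β : K) :
    IsFlexFrame g u p (w + α • u + β • p) where
  ne_zero := h.ne_zero
  polarForm_flex := h.polarForm_flex
  polarForm_tangent := h.polarForm_tangent
  polarForm_transversal := by
    simp [h.polarForm_flex_flex_tangent, h.polarForm_flex, h.polarForm_transversal]

end IsFlexFrame

end FlexFrame

theorem six_ne_zero {K : Type*} [Field K] [NeZero (2 : K)] [NeZero (3 : K)] : (6 : K) ≠ 0 := by
  rw [show (6 : K) = 2 * 3 by norm_num]
  exact mul_ne_zero two_ne_zero three_ne_zero

section PlaneCubic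

variable {K : Type*} [Field K] {g : MvPolynomial (Fin 3) K} {u p w : Fin 3 → K}

namespace IsFlexFrame

variable [NeZero (2 : K)]

-- Otherwise the flex tangent is a component of the cubic, and it meets the residual conic in a
-- singular point `u + y • p`.
theorem polarForm_self_ne_zero [IsAlgClosed K] (h : IsFlexFrame g u p w)
    (hg : g.IsHomogeneous 3) (hsm : IsNonsingular g) : polarForm g u u u ≠ 0 := by
  intro huuu
  obtain ⟨y, hy⟩ := IsAlgClosed.exists_pow_nat_eq (polarForm g u u w / 2) two_pos
  have hy' : polarForm g u u w - 2 * y ^ 2 = 0 := by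
    rw [hy, mul_div_cancel₀ _ two_ne_zero, sub_self]
  have hpolar (v : Fin 3 → K) : polarForm g (u + y • p) (u + y • p) v =
      polarForm g u u v + y ^ 2 * polarForm g p p v := by
    simp [h.polarForm_tangent, polarForm_comm_left g u p]
    ring
  have hsing : u + y • p = 0 := by
    refine hsm.eq_zero_of_polarForm_self_self hg fun v ↦ ?_
    have hv : v ∈ Submodule.span K (Set.range ![u, p, w]) := by
      rw [h.linearIndependent.span_eq_top_of_card_eq_finrank (by simp)]
      exact Submodule.mem_top
    obtain ⟨t, rfl⟩ := (Submodule.mem_span_range_iff_exists_fun K).mp hv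
    rw [hpolar]
    simp only [Fin.sum_univ_three, Matrix.cons_val_zero, Matrix.cons_val_one, Matrix.cons_val,
      map_add, map_smul, smul_eq_mul, huuu, h.polarForm_flex, h.polarForm_transversal,
      h.polarForm_flex_flex_tangent, h.polarForm_tangent_tangent_flex]
    linear_combination t 2 * hy'
  have hone := Fintype.linearIndependent_iff.mp h.linearIndependent ![1, y, 0]
    (by simpa [Fin.sum_univ_three] using hsing) 0
  exact one_ne_zero hone

theorem exists_normalized [IsAlgClosed K] [NeZero (3 : K)] (h : IsFlexFrame g u p w)
    (hg : g.IsHomogeneous 3) (hsm : IsNonsingular g) :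
    ∃ u' w', IsFlexFrame g u' p w' ∧ polarForm g u' u' u' = 6 ∧ polarForm g u' u' w' = 0 ∧
      polarForm g w' w' p = 0 := by
  have hsix : (6 : K) ≠ 0 := six_ne_zero
  have huuu := h.polarForm_self_ne_zero hg hsm
  obtain ⟨r, hr⟩ := IsAlgClosed.exists_pow_nat_eq (6 / polarForm g u u u) three_pos
  have hr0 : r ≠ 0 := by
    rintro rfl
    exact div_ne_zero hsix huuu (by rw [← hr, zero_pow three_ne_zero])
  have hframe := h.smul_left hr0
  set u' := r • u with hu'
  have huuu' : polarForm g u' u' u' = 6 := by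
    simp only [hu', map_smul, LinearMap.smul_apply, smul_eq_mul]
    rw [← div_mul_cancel₀ 6 huuu, ← hr]
    ring
  refine ⟨u', _, hframe.add_right (-polarForm g u' u' w / 6) (polarForm g p w w / 4),
    huuu', ?_, ?_⟩
  · simp only [map_add, map_smul, smul_eq_mul, huuu',
      hframe.polarForm_tangent_tangent_flex]
    field_simp
    ring
  · rw [polarForm_comm_right, polarForm_comm_left]
    simp only [map_add, map_smul, LinearMap.add_apply, LinearMap.smul_apply, smul_eq_mul,
      polarForm_comm_right g p w, hframe.polarForm_flex_flex_tangent, hframe.polarForm_tangent,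
      hframe.polarForm_flex, hframe.polarForm_transversal]
    have : (4 : K) ≠ 0 := by
      rw [show (4 : K) = 2 * 2 by norm_num]
      exact mul_ne_zero two_ne_zero two_ne_zero
    field_simp
    ring

theorem isProjEquiv_weierstrass [Infinite K] [NeZero (3 : K)] (h : IsFlexFrame g u p w)
    (hg : g.IsHomogeneous 3) (huuu : polarForm g u u u = 6) (huuw : polarForm g u u w = 0)
    (hwwp : polarForm g w w p = 0) :
    IsProjEquiv g (WeierstrassCurve.mk 0 0 0 (polarForm g w w u / 2)
      (polarForm g w w w / 6)).toProjective.polynomial := by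
  have htwo : (2 : K) ≠ 0 := two_ne_zero
  have hsix : (6 : K) ≠ 0 := six_ne_zero
  have hunit : IsUnit (Matrix.of ![u, p, w]).transpose :=
    (Matrix.isUnit_transpose _).mpr
      (Matrix.linearIndependent_rows_iff_isUnit.mp h.linearIndependent)
  refine isProjEquiv_of_eval_mulVec ((Matrix.isUnit_iff_isUnit_det _).mp hunit).ne_zero
    (neg_ne_zero.mpr one_ne_zero) fun v ↦ mul_left_cancel₀ hsix ?_
  have hmulVec : (Matrix.of ![u, p, w]).transpose.mulVec v = v 0 • u + v 1 • p + v 2 • w := by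
    rw [Matrix.mulVec_transpose, Matrix.vecMul_eq_sum, Fin.sum_univ_three]
    rfl
  rw [six_mul_eval_eq_polarForm hg, hmulVec, polarForm_linearCombination_self, huuu, huuw, hwwp,
    polarForm_comm_left g u p w, h.polarForm_flex, h.polarForm_transversal, h.polarForm_tangent,
    h.polarForm_flex_flex_tangent, h.polarForm_tangent_tangent_flex,
    WeierstrassCurve.Projective.eval_polynomial]
  field_simp
  ring

end IsFlexFrame

theorem exists_isProjEquiv_weierstrass [IsAlgClosed K] [NeZero (2 : K)] [NeZero (3 : K)]
    (hg : g.IsHomogeneous 3) (hsm : IsNonsingular g) :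
    ∃ W : WeierstrassCurve K, W.IsShortNF ∧ IsProjEquiv g W.toProjective.polynomial := by
  obtain ⟨u, p, w, hframe⟩ := exists_isFlexFrame hg hsm (by simp)
  obtain ⟨u, w, hframe, huuu, huuw, hwwp⟩ := hframe.exists_normalized hg hsm
  exact ⟨_, ⟨rfl, rfl, rfl⟩, hframe.isProjEquiv_weierstrass hg huuu huuw hwwp⟩

end PlaneCubic

section Weierstrass

variable {K : Type*} [Field K] {W : WeierstrassCurve K} [W.IsShortNF]

theorem cubic_ne_zero_of_isNonsingular_polynomial (hW : IsNonsingular W.toProjective.polynomial)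
    {x : K} (hx : 3 * x ^ 2 + W.a₄ = 0) : x ^ 3 + W.a₄ * x + W.a₆ ≠ 0 := by
  intro hroot
  have hsing := hW ![x, 0, 1] fun i ↦ by
    fin_cases i
    · refine (W.toProjective.eval_polynomialX _).trans ?_
      simp only [W.a₁_of_isShortNF, W.a₂_of_isShortNF, Matrix.cons_val]
      linear_combination -hx
    · refine (W.toProjective.eval_polynomialY _).trans ?_
      simp only [W.a₁_of_isShortNF, W.a₃_of_isShortNF, Matrix.cons_val]
      ring
    · refine (W.toProjective.eval_polynomialZ _).trans ?_
      simp only [W.a₁_of_isShortNF, W.a₂_of_isShortNF, W.a₃_of_isShortNF, Matrix.cons_val]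
      linear_combination x * hx - 3 * hroot
  exact one_ne_zero (congrFun hsing 2)

theorem eval_Ψ₃_of_isShortNF (x : K) :
    W.Ψ₃.eval x = 3 * x ^ 4 + 6 * W.a₄ * x ^ 2 + 12 * W.a₆ * x - W.a₄ ^ 2 := by
  simp only [WeierstrassCurve.Ψ₃, W.a₂_of_isShortNF, W.b₂_of_isCharNeTwoNF,
    W.b₄_of_isCharNeTwoNF, W.b₆_of_isCharNeTwoNF, W.b₈_of_isCharNeTwoNF, map_zero, map_mul,
    map_sub, map_pow, map_ofNat, Polynomial.eval_add, Polynomial.eval_sub, Polynomial.eval_mul,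
    Polynomial.eval_pow, Polynomial.eval_ofNat, Polynomial.eval_X, Polynomial.eval_C,
    Polynomial.eval_zero]
  ring

theorem exists_ne_zero_eval_Ψ₃_eq_zero [IsAlgClosed K] [NeZero (2 : K)] [NeZero (3 : K)]
    (hW : W.a₄ = 0 → W.a₆ ≠ 0) : ∃ x ≠ 0, W.Ψ₃.eval x = 0 := by
  by_cases ha : W.a₄ = 0
  · obtain ⟨x, hx⟩ := IsAlgClosed.exists_pow_nat_eq (-(2 * 2 * W.a₆)) three_pos
    have hx0 : x ^ 3 ≠ 0 := by simp [hx, hW ha, two_ne_zero (α := K)]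
    refine ⟨x, right_ne_zero_of_mul (pow_succ x 2 ▸ hx0), ?_⟩
    rw [eval_Ψ₃_of_isShortNF, ha]
    linear_combination 3 * x * hx
  · obtain ⟨x, hx⟩ := IsAlgClosed.exists_root W.Ψ₃
      (Polynomial.natDegree_pos_iff_degree_pos.mp (W.natDegree_Ψ₃_pos three_ne_zero)).ne'
    refine ⟨x, ?_, hx⟩
    rintro rfl
    rw [Polynomial.IsRoot, eval_Ψ₃_of_isShortNF] at hx
    exact ha (pow_eq_zero_iff two_ne_zero |>.mp (by linear_combination -hx))

-- The abscissas of the finite flexes are the roots of the `3`-division polynomial, and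
-- `Y = l X + n Z` is the tangent at the flex with abscissa `x`.
theorem exists_eval_polynomial_eq_flex_tangents [IsAlgClosed K] [NeZero (2 : K)] [NeZero (3 : K)]
    (hW : IsNonsingular W.toProjective.polynomial) :
    ∃ x l n : K, l ≠ 0 ∧ n + l * x ≠ 0 ∧ ∀ P : Fin 3 → K, eval P W.toProjective.polynomial =
      P 2 * (P 1 - (l * P 0 + n * P 2)) * (P 1 + (l * P 0 + n * P 2)) - (P 0 - x * P 2) ^ 3 := by
  have htwo : (2 : K) ≠ 0 := two_ne_zero
  obtain ⟨x, hx, hroot⟩ := exists_ne_zero_eval_Ψ₃_eq_zero (W := W) fun ha hb ↦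
    cubic_ne_zero_of_isNonsingular_polynomial hW (x := 0) (by simp [ha]) (by simp [hb])
  rw [eval_Ψ₃_of_isShortNF] at hroot
  obtain ⟨l, hl⟩ := IsAlgClosed.exists_pow_nat_eq (3 * x) two_pos
  have hl0 : l ≠ 0 := by
    rintro rfl
    exact mul_ne_zero three_ne_zero hx (by rw [← hl, zero_pow two_ne_zero])
  obtain ⟨n, hn⟩ : ∃ n, 2 * l * n = W.a₄ - 3 * x ^ 2 :=
    ⟨_, mul_div_cancel₀ _ (mul_ne_zero htwo hl0)⟩
  have hn_sq : n ^ 2 = W.a₆ + x ^ 3 := by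
    refine mul_left_cancel₀ (pow_ne_zero 2 (mul_ne_zero htwo hl0)) ?_
    linear_combination (2 * l * n + (W.a₄ - 3 * x ^ 2)) * hn - 4 * (W.a₆ + x ^ 3) * hl - hroot
  refine ⟨x, l, n, hl0, fun hm ↦ ?_, fun P ↦ ?_⟩
  · have hderiv : 3 * x ^ 2 + W.a₄ = 0 := by
      linear_combination 2 * l * hm - hn - 2 * x * hl
    refine cubic_ne_zero_of_isNonsingular_polynomial hW hderiv ?_
    linear_combination (n - l * x) * hm - hn_sq + x * hderiv + x ^ 2 * hl
  · rw [WeierstrassCurve.Projective.eval_polynomial, W.a₁_of_isShortNF, W.a₂_of_isShortNF,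
      W.a₃_of_isShortNF]
    linear_combination P 0 * P 2 ^ 2 * hn + P 2 ^ 3 * hn_sq + P 0 ^ 2 * P 2 * hl

end Weierstrass

section Hesse

variable {K : Type*} [Field K]

/-- A cubic with flex tangents `x = 0`, `y = 0` and `z = 0`, whose points of contact lie on the
line `x + y + z = 0`. -/
noncomputable def flexTriangleForm (d : K) : MvPolynomial (Fin 3) K :=
  (X 0 + X 1 + X 2) ^ 3 + C d * (X 0 * X 1 * X 2)

/-- The form `hesseCubic` over an arbitrary field. -/
noncomputable def hesseForm (k : K) : MvPolynomial (Fin 3) K :=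
  X 0 ^ 3 + X 1 ^ 3 + X 2 ^ 3 - C (3 * k) * (X 0 * X 1 * X 2)

theorem eval_flexTriangleForm (d : K) (v : Fin 3 → K) :
    eval v (flexTriangleForm d) = (v 0 + v 1 + v 2) ^ 3 + d * (v 0 * v 1 * v 2) := by
  simp [flexTriangleForm]

theorem eval_hesseForm (k : K) (v : Fin 3 → K) :
    eval v (hesseForm k) = v 0 ^ 3 + v 1 ^ 3 + v 2 ^ 3 - 3 * k * (v 0 * v 1 * v 2) := by
  simp [hesseForm]

theorem exists_isProjEquiv_flexTriangleForm [IsAlgClosed K] [NeZero (2 : K)] [NeZero (3 : K)]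
    {W : WeierstrassCurve K} [W.IsShortNF] (hW : IsNonsingular W.toProjective.polynomial) :
    ∃ d ≠ 0, IsProjEquiv W.toProjective.polynomial (flexTriangleForm d) := by
  have htwo : (2 : K) ≠ 0 := two_ne_zero
  obtain ⟨x, l, n, hl, hm, hfactor⟩ := exists_eval_polynomial_eq_flex_tangents hW
  obtain ⟨r, hrm⟩ : ∃ r, r * (n + l * x) = l := ⟨_, div_mul_cancel₀ l hm⟩
  have hr0 : r ≠ 0 := left_ne_zero_of_mul (hrm ▸ hl)
  let A : Matrix (Fin 3) (Fin 3) K := !![1 - x * r, 1, 1; 0, -l, l; -r, 0, 0]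
  have hdet : A.det = -(2 * (l * r)) := by
    simp only [A, Matrix.det_fin_three, Matrix.of_apply, Matrix.cons_val', Matrix.cons_val_zero,
      Matrix.cons_val_fin_one, Matrix.cons_val_one, Matrix.cons_val]
    ring
  refine ⟨-(2 * 2 * l ^ 2 * r), by simp [htwo, hl, hr0], isProjEquiv_of_eval_mulVec (A := A)
    (by simp [hdet, htwo, hl, hr0]) (neg_ne_zero.mpr one_ne_zero) fun v ↦ ?_⟩
  have hX : A.mulVec v 0 = (1 - x * r) * v 0 + v 1 + v 2 := by
    simp [A, Matrix.mulVec, dotProduct, Fin.sum_univ_three]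
  have hY : A.mulVec v 1 = -(l * v 1) + l * v 2 := by
    simp [A, Matrix.mulVec, dotProduct, Fin.sum_univ_three]
  have hZ : A.mulVec v 2 = -(r * v 0) := by
    simp [A, Matrix.mulVec, dotProduct, Fin.sum_univ_three]
  have htangent_pos : A.mulVec v 1 - (l * A.mulVec v 0 + n * A.mulVec v 2) = -(2 * l * v 1) := by
    rw [hX, hY, hZ]
    linear_combination v 0 * hrm
  have htangent_neg : A.mulVec v 1 + (l * A.mulVec v 0 + n * A.mulVec v 2) = 2 * l * v 2 := by
    rw [hX, hY, hZ]
    linear_combination -v 0 * hrm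
  have hline : A.mulVec v 0 - x * A.mulVec v 2 = v 0 + v 1 + v 2 := by
    rw [hX, hZ]
    ring
  rw [hfactor, htangent_pos, htangent_neg, hline, hZ, eval_flexTriangleForm]
  ring

theorem mul_mul_eq_cube_add_cube_add_cube_sub {R : Type*} [CommRing R] {ω : R}
    (hω : ω ^ 2 + ω + 1 = 0) (a b c : R) :
    (a + b + c) * (a + ω * b + ω ^ 2 * c) * (a + ω ^ 2 * b + ω * c) =
      a ^ 3 + b ^ 3 + c ^ 3 - 3 * a * b * c := by
  linear_combination (a ^ 2 * (b + c) + ω * a * (b ^ 2 + c ^ 2) + ω ^ 2 * b * c * (b + c)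
    + (ω - 1) * (b ^ 3 + c ^ 3) + (ω ^ 2 - ω + 3) * a * b * c) * hω

theorem isProjEquiv_flexTriangleForm_hesseForm [Infinite K] [NeZero (3 : K)] {d s ω : K}
    (hd : d ≠ 0) (hs : s ^ 3 * (27 + d) = d) (hω : ω ^ 2 + ω + 1 = 0) :
    IsProjEquiv (flexTriangleForm d) (hesseForm s) := by
  have hs0 : s ≠ 0 := by
    rintro rfl
    exact hd (by linear_combination -hs)
  let A : Matrix (Fin 3) (Fin 3) K := !![s, 1, 1; s, ω, ω ^ 2; s, ω ^ 2, ω]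
  have hdet : A.det = -(3 * s * (2 * ω + 1)) := by
    simp only [A, Matrix.det_fin_three, Matrix.of_apply, Matrix.cons_val', Matrix.cons_val_zero,
      Matrix.cons_val_fin_one, Matrix.cons_val_one, Matrix.cons_val]
    linear_combination (-s * ω ^ 2 + s * ω + 3 * s) * hω
  have hdisc : (2 * ω + 1) ^ 2 = -3 := by
    linear_combination 4 * hω
  have hdet0 : A.det ≠ 0 := by
    have h3 : (3 : K) ≠ 0 := three_ne_zero
    refine hdet ▸ neg_ne_zero.mpr (mul_ne_zero (mul_ne_zero h3 hs0) ?_)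
    exact ne_zero_pow two_ne_zero (hdisc ▸ neg_ne_zero.mpr h3)
  refine isProjEquiv_of_eval_mulVec hdet0 hd fun v ↦ ?_
  have hX : A.mulVec v 0 = s * v 0 + v 1 + v 2 := by
    simp [A, Matrix.mulVec, dotProduct, Fin.sum_univ_three]
  have hY : A.mulVec v 1 = s * v 0 + ω * v 1 + ω ^ 2 * v 2 := by
    simp [A, Matrix.mulVec, dotProduct, Fin.sum_univ_three]
  have hZ : A.mulVec v 2 = s * v 0 + ω ^ 2 * v 1 + ω * v 2 := by
    simp [A, Matrix.mulVec, dotProduct, Fin.sum_univ_three]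
  have hsum : A.mulVec v 0 + A.mulVec v 1 + A.mulVec v 2 = 3 * (s * v 0) := by
    rw [hX, hY, hZ]
    linear_combination (v 1 + v 2) * hω
  have hprod : A.mulVec v 0 * A.mulVec v 1 * A.mulVec v 2 =
      (s * v 0) ^ 3 + v 1 ^ 3 + v 2 ^ 3 - 3 * (s * v 0) * v 1 * v 2 := by
    rw [hX, hY, hZ, mul_mul_eq_cube_add_cube_add_cube_sub hω]
  rw [eval_flexTriangleForm, eval_hesseForm, hsum, hprod]
  linear_combination v 0 ^ 3 * hs

theorem IsNonsingular.twentySeven_add_ne_zero {d : K}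
    (hd : IsNonsingular (flexTriangleForm d)) : 27 + d ≠ 0 := by
  intro h
  have hsing := hd ![1, 1, 1] fun i ↦ by
    trans 27 + d
    · fin_cases i <;> simp [flexTriangleForm, pderiv_X] <;> norm_num
    · exact h
  exact one_ne_zero (congrFun hsing 0)

theorem exists_isProjEquiv_hesseForm [IsAlgClosed K] [NeZero (3 : K)] {d : K} (hd : d ≠ 0)
    (hsm : IsNonsingular (flexTriangleForm d)) :
    ∃ k : K, k ^ 3 ≠ 1 ∧ IsProjEquiv (flexTriangleForm d) (hesseForm k) := by
  have hd' : 27 + d ≠ 0 := hsm.twentySeven_add_ne_zero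
  obtain ⟨k, hk⟩ := IsAlgClosed.exists_pow_nat_eq (d / (27 + d)) three_pos
  have : NeZero ((3 : ℕ) : K) := ⟨three_ne_zero⟩
  obtain ⟨ω, hω⟩ := HasEnoughRootsOfUnity.exists_primitiveRoot K 3
  have hgeom := hω.geom_sum_eq_zero (by norm_num)
  simp only [Finset.sum_range_succ, Finset.sum_range_zero, pow_zero, pow_one] at hgeom
  refine ⟨k, fun hk1 ↦ pow_ne_zero 3 (three_ne_zero (α := K)) ?_,
    isProjEquiv_flexTriangleForm_hesseForm (ω := ω) hd
      (by rw [hk, div_mul_cancel₀ _ hd']) (by linear_combination hgeom)⟩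
  rw [hk, div_eq_one_iff_eq hd'] at hk1
  linear_combination -hk1

end Hesse

theorem smooth_plane_cubic_hesse_form_general {K : Type*} [Field K] [IsAlgClosed K]
    [NeZero (2 : K)] [NeZero (3 : K)] (g : MvPolynomial (Fin 3) K) (hg : g.IsHomogeneous 3)
    (hsm : IsNonsingular g) :
    ∃ (A : GL (Fin 3) K) (c : Kˣ) (k : K), k ^ 3 ≠ 1 ∧
      aeval (fun i ↦ ∑ j, (A : Matrix (Fin 3) (Fin 3) K) i j • X j) g =
        (c : K) • hesseForm k := by
  obtain ⟨W, _, hgW⟩ := exists_isProjEquiv_weierstrass hg hsm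
  have hW := hsm.of_isProjEquiv hgW
  obtain ⟨d, hd, hWd⟩ := exists_isProjEquiv_flexTriangleForm hW
  obtain ⟨k, hk, hdk⟩ := exists_isProjEquiv_hesseForm hd (hW.of_isProjEquiv hWd)
  obtain ⟨A, c, hA⟩ := (hgW.trans hWd).trans hdk
  exact ⟨A, c, k, hk, by rw [← linearSubst_eq_aeval, hA]⟩

/-- Every smooth plane cubic over `ℂ` is projectively equivalent to a cubic in Hesse
form: if `g` is a homogeneous cubic in three variables whose partial derivatives have no
common nonzero zero, then there are `A ∈ GL₃(ℂ)`, `c ∈ ℂˣ` and `k ∈ ℂ` with `k³ ≠ 1`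
such that substituting the linear change of variables given by `A` into `g` yields
`c·(x³ + y³ + z³ − 3k·xyz)`. -/
theorem smooth_plane_cubic_hesse_form (g : MvPolynomial (Fin 3) ℂ)
    (hg : g.IsHomogeneous 3)
    (hsm : ∀ p : Fin 3 → ℂ,
      (∀ i : Fin 3, MvPolynomial.eval p (MvPolynomial.pderiv i g) = 0) → p = 0) :
    ∃ (A : GL (Fin 3) ℂ) (c : ℂˣ) (k : ℂ), k ^ 3 ≠ 1 ∧
      MvPolynomial.aeval
        (fun i : Fin 3 => ∑ j : Fin 3, (A : Matrix (Fin 3) (Fin 3) ℂ) i j • X j) g =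
      (c : ℂ) • hesseCubic k :=
  smooth_plane_cubic_hesse_form_general g hg hsm
end
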